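/- Let d ≥ 1 and let k ≥ 1 be an integer. Every locally compact subset of ℝ^d that is C^k homogeneous is a C^k submanifold of ℝ^d. -/

import Mathlib

open Metric Set

noncomputable section

/-- `ℝ^d` as a Euclidean space. -/
abbrev Euc (d : ℕ) := EuclideanSpace ℝ (Fin d)

/-- `H` is a `C^k` diffeomorphism from the open set `U` onto the open set `V`,
with inverse `H'`. -/
def IsCkDiffeoOn {E F : Type*} [NormedAddCommGroup E] [NormedSpace ℝ E]
    [NormedAddCommGroup F] [NormedSpace ℝ F]
    (k : ℕ) (H : E → F) (H' : F → E) (U : Set E) (V : Set F) : Prop :=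
  IsOpen U ∧ IsOpen V ∧ ContDiffOn ℝ k H U ∧ ContDiffOn ℝ k H' V ∧
    Set.MapsTo H U V ∧ Set.MapsTo H' V U ∧
    (∀ x ∈ U, H' (H x) = x) ∧ (∀ y ∈ V, H (H' y) = y)

/-- `N` is `C^k` homogeneous in `E`: any point of `N` can be taken to any other point of `N`
by a `C^k` diffeomorphism between open neighborhoods preserving `N`. -/
def CkHomogeneous {E : Type*} [NormedAddCommGroup E] [NormedSpace ℝ E]
    (k : ℕ) (N : Set E) : Prop :=
  ∀ x ∈ N, ∀ y ∈ N, ∃ (U V : Set E) (H H' : E → E),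
    IsCkDiffeoOn k H H' U V ∧ x ∈ U ∧ y ∈ V ∧ H x = y ∧ H '' (N ∩ U) = N ∩ V

/-- `N ⊆ ℝ^d` is a `C^k` submanifold of `ℝ^d`: near each of its points, `N` can be
straightened to a coordinate plane `ℝ^j × {0}` by a `C^k` diffeomorphism. -/
def IsCkSubmanifold (k d : ℕ) (N : Set (Euc d)) : Prop :=
  ∀ p ∈ N, ∃ (U V : Set (Euc d)) (φ φ' : Euc d → Euc d) (j : ℕ),
    IsCkDiffeoOn k φ φ' U V ∧ p ∈ U ∧
    φ '' (N ∩ U) = V ∩ {x : Euc d | ∀ i : Fin d, j ≤ (i : ℕ) → x i = 0}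

/-- `N` is locally compact: every point of `N` has a compact neighborhood in the
subspace topology. -/
def LocallyCompactSubset {E : Type*} [NormedAddCommGroup E] (N : Set E) : Prop :=
  ∀ x ∈ N, ∃ K ⊆ N, IsCompact K ∧ ∃ U : Set E, IsOpen U ∧ x ∈ U ∧ N ∩ U ⊆ K

open Filter Topology Asymptotics

set_option linter.unusedSectionVars false

section Base

variable {E : Type} [NormedAddCommGroup E] [NormedSpace ℝ E]

/-- Functionals that are strictly infinitesimal on `N` at `p`. -/
def AnnAt (N : Set E) (p : E) : Submodule ℝ (E →L[ℝ] ℝ) where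
  carrier := {l | (fun z : E × E => l (z.1 - z.2)) =o[𝓝[N ×ˢ N] (p, p)] fun z => z.1 - z.2}
  add_mem' := by
    intro a b ha hb
    exact (IsLittleO.add ha hb)
  zero_mem' := by
    simp
  smul_mem' := by
    intro c a ha
    exact IsLittleO.const_smul_left ha c

lemma mem_AnnAt {N : Set E} {p : E} {l : E →L[ℝ] ℝ} :
    l ∈ AnnAt N p ↔
      (fun z : E × E => l (z.1 - z.2)) =o[𝓝[N ×ˢ N] (p, p)] fun z => z.1 - z.2 := Iff.rfl

/-- Two-sided bound of size `ε`. -/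
def TwoB (N : Set E) (l : E →L[ℝ] ℝ) (ε : ℝ) (p : E) : Prop :=
  ∀ᶠ z : E × E in 𝓝[N ×ˢ N] (p, p), ‖l (z.1 - z.2)‖ ≤ ε * ‖z.1 - z.2‖

lemma mem_AnnAt' {N : Set E} {p : E} {l : E →L[ℝ] ℝ} :
    l ∈ AnnAt N p ↔ ∀ ε > 0, TwoB N l ε p := by
  rw [mem_AnnAt, isLittleO_iff]
  rfl

/-- One-sided infinitesimal functionals. -/
def OneAt (N : Set E) (p : E) (l : E →L[ℝ] ℝ) : Prop :=
  ∀ ε > 0, ∀ᶠ x in 𝓝[N] p, l (x - p) ≤ ε * ‖x - p‖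

lemma TwoB.perturb {N : Set E} {p : E} {l l' : E →L[ℝ] ℝ} {ε δ : ℝ} (h : TwoB N l ε p)
    (hl : ‖l' - l‖ ≤ δ) : TwoB N l' (ε + δ) p := by
  filter_upwards [h] with z hz
  have h1 : ‖(l' - l) (z.1 - z.2)‖ ≤ δ * ‖z.1 - z.2‖ := (l' - l).le_of_opNorm_le hl _
  have h2 : l' (z.1 - z.2) = l (z.1 - z.2) + (l' - l) (z.1 - z.2) := by simp
  rw [h2]
  calc _ ≤ _ := norm_add_le _ _
    _ ≤ _ := by linarith

lemma isOpen_TwoB (N : Set E) (l : E →L[ℝ] ℝ) (ε : ℝ) : IsOpen {p | TwoB N l ε p} := by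
  unfold TwoB
  simp only [eventually_nhdsWithin_iff]
  exact isOpen_setOfPred_eventually_nhds.preimage (f := fun p : E => (p, p)) (by fun_prop)

lemma baire_generic {X ι : Type*} [TopologicalSpace X] [BaireSpace X] [Nonempty X] [Countable ι]
    (C : ι → Set X) (hC : ∀ i, IsClosed (C i)) : ∃ q, ∀ i, q ∈ C i → q ∈ interior (C i) := by
  have : Dense (⋂ i, (frontier (C i))ᶜ) := by
    apply dense_iInter_of_isOpen
    · intro i; exact isClosed_frontier.isOpen_compl
    · intro i
      rw [← interior_eq_empty_iff_dense_compl]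
      exact interior_frontier (hC i)
  obtain ⟨q, hq⟩ := this.nonempty
  refine ⟨q, fun i hi => ?_⟩
  have := mem_iInter.1 hq i
  rw [mem_compl_iff, (hC i).frontier_eq] at this
  by_contra h
  exact this ⟨hi, h⟩

lemma locallyCompactSpace_of {N : Set E} (h : LocallyCompactSubset N) : LocallyCompactSpace N := by
  have : WeaklyLocallyCompactSpace N := by
    constructor
    rintro ⟨x, hx⟩
    obtain ⟨K, hKN, hK, U, hU, hxU, hNU⟩ := h x hx
    refine ⟨Subtype.val ⁻¹' K, ?_, ?_⟩
    · exact Topology.IsInducing.subtypeVal.isCompact_preimage_iff (by simpa using hKN) |>.2 hK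
    · refine mem_of_superset ((hU.preimage continuous_subtype_val).mem_nhds hxU) ?_
      rintro ⟨y, hy⟩ hyU
      exact hNU ⟨hy, hyU⟩
  infer_instance

/-- The generic point. -/
lemma exists_generic [FiniteDimensional ℝ E] {N : Set E} (hne : N.Nonempty)
    (h : LocallyCompactSubset N) :
    ∃ p ∈ N, (∀ l, OneAt N p l → l ∈ AnnAt N p) ∧
      ∀ l, (∀ ε > 0, ∃ᶠ q in 𝓝[N] p, ∃ l' ∈ AnnAt N q, ‖l' - l‖ < ε) → l ∈ AnnAt N p := by
  have := locallyCompactSpace_of h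
  have : Nonempty N := hne.to_subtype
  let D : ℕ → (E →L[ℝ] ℝ) := TopologicalSpace.denseSeq _
  have hD : DenseRange D := TopologicalSpace.denseRange_denseSeq _
  let e : ℕ → ℝ := fun i => 1 / ((i : ℝ) + 1)
  have he : ∀ i, 0 < e i := fun i => Nat.one_div_pos_of_nat
  let S : ℕ × ℕ × ℕ → Set N := fun t =>
    {q | ∀ x : N, e t.2.2 ≤ dist (x : E) q ∨ D t.1 (x - q) ≤ e t.2.1 * ‖(x : E) - q‖}
  let T : ℕ × ℕ → Set N := fun t => {q | ¬ TwoB N (D t.1) (e t.2) q}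
  have hS : ∀ t, IsClosed (S t) := by
    intro t
    simp only [S, ofPred_forall, ofPred_or]
    refine isClosed_iInter fun x => IsClosed.union ?_ ?_
    · exact isClosed_le (by fun_prop) (by fun_prop)
    · exact isClosed_le (by fun_prop) (by fun_prop)
  have hT : ∀ t, IsClosed (T t) := by
    intro t
    exact ((isOpen_TwoB N (D t.1) (e t.2)).preimage continuous_subtype_val).isClosed_compl
  obtain ⟨p, hp⟩ := baire_generic (Sum.elim S T) (by rintro (t | t); exacts [hS t, hT t])
  have hpS := fun t => hp (Sum.inl t)
  have hpT := fun t => hp (Sum.inr t)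
  simp only [Sum.elim_inl, Sum.elim_inr] at hpS hpT
  refine ⟨p, p.2, ?_, ?_⟩
  · intro l hl
    rw [mem_AnnAt']
    intro ε hε
    obtain ⟨i, hi⟩ := exists_nat_one_div_lt (half_pos hε)
    have hi : e i < ε / 2 := hi
    obtain ⟨n, hn⟩ := hD.exists_dist_lt l (half_pos (he i))
    rw [dist_eq_norm] at hn
    have h1 := hl (e i / 2) (half_pos (he i))
    rw [eventually_nhdsWithin_iff, Metric.eventually_nhds_iff] at h1
    obtain ⟨δ, hδ, h1⟩ := h1
    obtain ⟨j, hj⟩ := exists_nat_one_div_lt hδ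
    have hj : e j < δ := hj
    have hmem : p ∈ S (n, i, j) := by
      intro x
      by_cases hx : e j ≤ dist (x : E) p
      · exact Or.inl hx
      · right
        have h2 := h1 (lt_trans (not_le.1 hx) hj) x.2
        have h3 : ‖(D n - l) ((x : E) - p)‖ ≤ (e i / 2) * ‖(x : E) - p‖ :=
          (D n - l).le_of_opNorm_le (by rw [norm_sub_rev]; exact hn.le) _
        have h4 := le_trans (le_abs_self _) h3
        simp only [sub_apply] at h4
        show D n (x - p) ≤ e i * _
        linarith
    have hinter := hpS _ hmem
    have hTB : TwoB N (D n) (e i) p := by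
      rw [mem_interior_iff_mem_nhds, Metric.mem_nhds_iff] at hinter
      obtain ⟨r, hr, hinter⟩ := hinter
      have hr' : 0 < min r (e j / 2) := lt_min hr (half_pos (he j))
      unfold TwoB
      rw [eventually_nhdsWithin_iff, Metric.eventually_nhds_iff]
      refine ⟨_, hr', ?_⟩
      rintro ⟨x, y⟩ hxy ⟨hx, hy⟩
      rw [Prod.dist_eq, max_lt_iff, lt_min_iff, lt_min_iff] at hxy
      obtain ⟨⟨hx1, hx2⟩, hy1, hy2⟩ := hxy
      have hxS : (⟨x, hx⟩ : N) ∈ S (n, i, j) := hinter hx1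
      have hyS : (⟨y, hy⟩ : N) ∈ S (n, i, j) := hinter hy1
      have hd : dist x y < e j := by
        have := dist_triangle_right x y p
        simp only at hx2 hy2
        linarith
      have a1 := (hyS ⟨x, hx⟩).resolve_left (not_le.2 hd)
      have a2 := (hxS ⟨y, hy⟩).resolve_left (not_le.2 (by simpa [dist_comm] using hd))
      simp only at a1 a2
      rw [Real.norm_eq_abs, abs_le]
      refine ⟨?_, a1⟩
      rw [norm_sub_rev, map_sub] at a2
      simp only [map_sub]
      linarith
    have := hTB.perturb (l' := l) hn.le
    unfold TwoB at this ⊢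
    filter_upwards [this] with z hz
    refine hz.trans ?_
    gcongr
    have := he i
    linarith
  · intro l hl
    rw [mem_AnnAt']
    intro ε hε
    obtain ⟨i, hi⟩ := exists_nat_one_div_lt (half_pos hε)
    have hi : e i < ε / 2 := hi
    obtain ⟨n, hn⟩ := hD.exists_dist_lt l (half_pos (he i))
    rw [dist_eq_norm] at hn
    have hTB : TwoB N (D n) (e i) p := by
      by_contra hcon
      have hinter := hpT (n, i) hcon
      rw [mem_interior_iff_mem_nhds, nhds_subtype, mem_comap] at hinter
      obtain ⟨s, hs, hsT⟩ := hinter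
      have hs' : ∀ᶠ q in 𝓝[N] (p : E), q ∈ s := mem_nhdsWithin_of_mem_nhds hs
      obtain ⟨q, ⟨l', hl', hll⟩, hqs, hqN⟩ :=
        ((hl _ (half_pos (he i))).and_eventually (hs'.and self_mem_nhdsWithin)).exists
      have : (⟨q, hqN⟩ : N) ∈ T (n, i) := hsT hqs
      apply this
      have h0 : ‖D n - l'‖ < e i := by
        have := norm_sub_le_norm_sub_add_norm_sub (D n) l l'
        rw [norm_sub_rev (D n) l, norm_sub_rev l l'] at this
        linarith
      have := (mem_AnnAt'.1 hl' _ (sub_pos.2 h0)).perturb (l' := D n) le_rfl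
      simpa using this
    have := hTB.perturb (l' := l) hn.le
    unfold TwoB at this ⊢
    filter_upwards [this] with z hz
    refine hz.trans ?_
    gcongr
    have := he i
    linarith

/-- Invariance of `AnnAt`. -/
lemma AnnAt.comp {N : Set E} {U : Set E} {H : E → E} {p : E} {A : E →L[ℝ] E}
    (hU : U ∈ 𝓝 p) (hH : HasStrictFDerivAt H A p) (hN : ∀ x ∈ N ∩ U, H x ∈ N)
    {l : E →L[ℝ] ℝ} (hl : l ∈ AnnAt N (H p)) : l.comp A ∈ AnnAt N p := by
  rw [mem_AnnAt] at *
  have htend : Tendsto (fun z : E × E => (H z.1, H z.2)) (𝓝[N ×ˢ N] (p, p))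
      (𝓝[N ×ˢ N] (H p, H p)) := by
    apply tendsto_nhdsWithin_of_tendsto_nhds_of_eventually_within
    · have hc := hH.continuousAt
      have : ContinuousAt (fun z : E × E => (H z.1, H z.2)) (p, p) :=
        (ContinuousAt.comp' (f := fun z : E × E => z.1) (x := (p, p)) hc continuousAt_fst).prodMk
          (ContinuousAt.comp' (f := fun z : E × E => z.2) (x := (p, p)) hc continuousAt_snd)
      exact this.mono_left nhdsWithin_le_nhds
    · have : ∀ᶠ z in 𝓝[N ×ˢ N] (p, p), z ∈ U ×ˢ U :=
        mem_nhdsWithin_of_mem_nhds (prod_mem_nhds hU hU)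
      filter_upwards [this, self_mem_nhdsWithin] with z hz hzN
      exact ⟨hN _ ⟨hzN.1, hz.1⟩, hN _ ⟨hzN.2, hz.2⟩⟩
  have h1 := hl.comp_tendsto htend
  have hO : (fun z : E × E => H z.1 - H z.2) =O[𝓝[N ×ˢ N] (p, p)] fun z => z.1 - z.2 :=
    hH.isBigO_sub.mono nhdsWithin_le_nhds
  have h2 := h1.trans_isBigO hO
  have h3 := (l.isBigO_comp _ _).trans_isLittleO (hH.isLittleO.mono (nhdsWithin_le_nhds (s := N ×ˢ N)))
  refine (h2.sub h3).congr_left ?_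
  intro z
  simp

lemma OneAt.comp {N : Set E} {U : Set E} {H : E → E} {p : E} {A : E →L[ℝ] E}
    (hU : U ∈ 𝓝 p) (hH : HasStrictFDerivAt H A p) (hN : ∀ x ∈ N ∩ U, H x ∈ N)
    {l : E →L[ℝ] ℝ} (hl : OneAt N (H p) l) : OneAt N p (l.comp A) := by
  intro ε hε
  have htend : Tendsto H (𝓝[N] p) (𝓝[N] (H p)) := by
    apply tendsto_nhdsWithin_of_tendsto_nhds_of_eventually_within
    · exact hH.continuousAt.mono_left nhdsWithin_le_nhds
    · filter_upwards [mem_nhdsWithin_of_mem_nhds hU, self_mem_nhdsWithin] with z hz hzN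
      exact hN _ ⟨hzN, hz⟩
  have hO := hH.hasFDerivAt.isBigO_sub
  obtain ⟨C, hC, hO⟩ := hO.exists_pos
  have h1 := htend.eventually (hl (ε / 2 / C) (by positivity))
  have h3 := (l.isBigO_comp _ _).trans_isLittleO hH.hasFDerivAt.isLittleO
  have h3 := (isLittleO_iff.1 h3) (half_pos hε)
  filter_upwards [h1, mem_nhdsWithin_of_mem_nhds hO.bound, mem_nhdsWithin_of_mem_nhds h3]
    with x a1 a2 a3
  have a4 := (abs_le.1 a3).1
  simp only [map_sub] at a4 a1 ⊢
  simp only [ContinuousLinearMap.comp_apply]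
  have a5 : ε / 2 / C * ‖H x - H p‖ ≤ ε / 2 / C * (C * ‖x - p‖) := by gcongr
  have a6 : ε / 2 / C * (C * ‖x - p‖) = ε / 2 * ‖x - p‖ := by field_simp
  linarith

end Base

section Base2

variable {E : Type} [NormedAddCommGroup E] [NormedSpace ℝ E]

/-- `N` is a `C^k` graph near some point. -/
def GraphSomewhere (k : ℕ) (N : Set E) : Prop :=
  ∃ (m n : ℕ) (e : E ≃L[ℝ] Euc m × Euc n) (W : Set (Euc m)) (O : Set (Euc m × Euc n))
    (f : Euc m → Euc n), IsOpen W ∧ IsOpen O ∧ W.Nonempty ∧ ContDiffOn ℝ k f W ∧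
      ∀ z, (e.symm z ∈ N ∧ z ∈ O) ↔ (z.1 ∈ W ∧ z.2 = f z.1)

lemma hom_data {k : ℕ} (hk : 1 ≤ k) {N : Set E} (h : CkHomogeneous k N) {p q : E} (hp : p ∈ N)
    (hq : q ∈ N) : ∃ (U V : Set E) (H H' : E → E) (A A' : E →L[ℝ] E), U ∈ 𝓝 p ∧ V ∈ 𝓝 q ∧
      H p = q ∧ H' q = p ∧ HasStrictFDerivAt H A p ∧ HasStrictFDerivAt H' A' q ∧
      (∀ x ∈ N ∩ U, H x ∈ N) ∧ (∀ x ∈ N ∩ V, H' x ∈ N) ∧ A.comp A' = ContinuousLinearMap.id ℝ E := by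
  obtain ⟨U, V, H, H', ⟨hU, hV, hH, hH', hm, hm', hl, hr⟩, hpU, hqV, hpq, himg⟩ := h p hp q hq
  have hUp := hU.mem_nhds hpU
  have hVq := hV.mem_nhds hqV
  have hk0 : (k : WithTop ℕ∞) ≠ 0 := by exact_mod_cast (by omega : k ≠ 0)
  have hqp : H' q = p := by rw [← hpq]; exact hl p hpU
  have h1 := (hH.contDiffAt hUp).hasStrictFDerivAt hk0
  have h2 := (hH'.contDiffAt hVq).hasStrictFDerivAt hk0
  refine ⟨U, V, H, H', _, _, hUp, hVq, hpq, hqp, h1, h2, ?_, ?_, ?_⟩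
  · intro x hx
    have : H x ∈ N ∩ V := himg ▸ mem_image_of_mem H hx
    exact this.1
  · intro y hy
    rw [← himg] at hy
    obtain ⟨x, hx, rfl⟩ := hy
    rw [hl x hx.2]
    exact hx.1
  · have h3 : HasFDerivAt (fun y => H (H' y)) ((fderiv ℝ H p).comp (fderiv ℝ H' q)) q := by
      apply HasFDerivAt.comp
      · rw [hqp]; exact h1.hasFDerivAt
      · exact h2.hasFDerivAt
    have h4 : HasFDerivAt (fun y => H (H' y)) (ContinuousLinearMap.id ℝ E) q := by
      apply (hasFDerivAt_id q).congr_of_eventuallyEq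
      filter_upwards [hVq] with y hy
      exact hr y hy
    exact h3.unique h4

lemma ann_finrank_le [FiniteDimensional ℝ E] {k : ℕ} (hk : 1 ≤ k) {N : Set E}
    (h : CkHomogeneous k N) {p q : E} (hp : p ∈ N) (hq : q ∈ N) :
    Module.finrank ℝ (AnnAt N q) ≤ Module.finrank ℝ (AnnAt N p) := by
  obtain ⟨U, V, H, H', A, A', hU, hV, hpq, hqp, hA, hA', hN, hN', hc⟩ := hom_data hk h hp hq
  let T : (E →L[ℝ] ℝ) →ₗ[ℝ] (E →L[ℝ] ℝ) :=
    { toFun := fun l => l.comp A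
      map_add' := fun _ _ => rfl
      map_smul' := fun _ _ => rfl }
  have hT : ∀ l ∈ AnnAt N q, T l ∈ AnnAt N p := fun l hl =>
    AnnAt.comp hU hA hN (by rw [hpq]; exact hl)
  apply LinearMap.finrank_le_finrank_of_injective (f := T.restrict hT)
  intro a b hab
  have : (a : E →L[ℝ] ℝ).comp A = (b : E →L[ℝ] ℝ).comp A := congrArg Subtype.val hab
  ext x
  have h1 := congrArg (fun l : E →L[ℝ] ℝ => l (A' x)) this
  have h2 : A (A' x) = x := congrArg (fun l : E →L[ℝ] E => l x) hc
  simpa [h2] using h1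

lemma one_ann_all {k : ℕ} (hk : 1 ≤ k) {N : Set E}
    (h : CkHomogeneous k N) {p q : E} (hp : p ∈ N) (hq : q ∈ N)
    (hone : ∀ l, OneAt N p l → l ∈ AnnAt N p) (l : E →L[ℝ] ℝ) (hl : OneAt N q l) :
    l ∈ AnnAt N q := by
  obtain ⟨U, V, H, H', A, A', hU, hV, hpq, hqp, hA, hA', hN, hN', hc⟩ := hom_data hk h hp hq
  have h1 := hone _ (OneAt.comp hU hA hN (by rw [hpq]; exact hl))
  have h2 := AnnAt.comp hV hA' hN' (by rw [hqp]; exact h1)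
  rwa [ContinuousLinearMap.comp_assoc, hc, ContinuousLinearMap.comp_id] at h2

lemma contDiffOn_one_of_strict {F G : Type*} [NormedAddCommGroup F] [NormedSpace ℝ F]
    [NormedAddCommGroup G] [NormedSpace ℝ G] {W : Set F} (hW : IsOpen W) {f : F → G}
    (h : ∀ a ∈ W, ∃ D : F →L[ℝ] G, HasStrictFDerivAt f D a) : ContDiffOn ℝ 1 f W := by
  have h' : ∀ a ∈ W, HasStrictFDerivAt f (fderiv ℝ f a) a := by
    intro a ha
    obtain ⟨D, hD⟩ := h a ha
    rwa [hD.hasFDerivAt.fderiv]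
  rw [← zero_add (1 : WithTop ℕ∞), contDiffOn_succ_iff_fderiv_of_isOpen hW]
  refine ⟨fun a ha => (h' a ha).hasFDerivAt.differentiableAt.differentiableWithinAt, by simp, ?_⟩
  rw [contDiffOn_zero]
  intro a ha
  apply ContinuousAt.continuousWithinAt
  rw [ContinuousAt, Metric.tendsto_nhds]
  intro ε hε
  have h1 := isLittleO_iff.1 (h' a ha).isLittleO (half_pos hε)
  have h2 := eventually_eventually_nhds.2 h1
  have h3 : ∀ᶠ x in 𝓝 a, ∀ᶠ z : F × F in 𝓝 (x, x),
      ‖f z.1 - f z.2 - fderiv ℝ f a (z.1 - z.2)‖ ≤ ε / 2 * ‖z.1 - z.2‖ :=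
    (continuous_id.prodMk continuous_id).continuousAt.eventually h2
  filter_upwards [h3, hW.mem_nhds ha] with x hx hxW
  rw [dist_eq_norm]
  refine lt_of_le_of_lt ?_ (half_lt_self hε)
  have h4 : HasFDerivAt (fun y => f y - fderiv ℝ f a y) (fderiv ℝ f x - fderiv ℝ f a) x :=
    (h' x hxW).hasFDerivAt.sub (fderiv ℝ f a).hasFDerivAt
  apply h4.le_of_lip' (half_pos hε).le
  have h5 : ∀ᶠ y in 𝓝 x, ‖f y - f x - fderiv ℝ f a (y - x)‖ ≤ ε / 2 * ‖y - x‖ :=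
    (continuous_id.prodMk (continuous_const (y := x))).continuousAt.eventually hx
  filter_upwards [h5] with y hy
  convert hy using 2
  rw [map_sub]
  abel

/-- Splitting adapted to a finite dimensional space of functionals. -/
lemma exists_split [FiniteDimensional ℝ E] (S : Submodule ℝ (E →L[ℝ] ℝ)) :
    ∃ (m : ℕ) (e : E ≃L[ℝ] Euc m × Euc (Module.finrank ℝ S)),
      (∀ i, (EuclideanSpace.proj i).comp ((ContinuousLinearMap.snd ℝ _ _).comp
        (e : E →L[ℝ] Euc m × Euc (Module.finrank ℝ S))) ∈ S) ∧
      ∀ a : Euc m →L[ℝ] ℝ, a.comp ((ContinuousLinearMap.fst ℝ _ _).comp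
        (e : E →L[ℝ] Euc m × Euc (Module.finrank ℝ S))) ∈ S →
        a = 0 := by
  set n := Module.finrank ℝ S with hn
  have : Module.Free ℝ S := Module.Free.of_divisionRing ℝ S
  let b : Module.Basis (Fin n) ℝ S := Module.finBasis ℝ S
  let Q : E →L[ℝ] Euc n :=
    ((EuclideanSpace.equiv (Fin n) ℝ).symm : (Fin n → ℝ) →L[ℝ] Euc n).comp
      (ContinuousLinearMap.pi fun i => (b i : E →L[ℝ] ℝ))
  have hQ : ∀ x i, Q x i = (b i : E →L[ℝ] ℝ) x := fun x i => rfl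
  have hspan : ∀ l ∈ S, ∀ x, Q x = 0 → l x = 0 := by
    intro l hl x hx
    have h1 := congrArg (Subtype.val) (b.sum_repr ⟨l, hl⟩)
    have h2 := congrArg (fun l : E →L[ℝ] ℝ => l x) h1
    simp only [Submodule.coe_sum, Submodule.coe_smul] at h2
    rw [← h2]
    rw [sum_apply]
    apply Finset.sum_eq_zero
    intro i _
    have : (b i : E →L[ℝ] ℝ) x = 0 := by rw [← hQ, hx]; rfl
    simp [this]
  have hsurj : (Q : E →ₗ[ℝ] Euc n).range = ⊤ := by
    by_contra hne
    obtain ⟨c, hc0, hc⟩ := Submodule.exists_le_ker_of_lt_top _ (lt_top_iff_ne_top.2 hne)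
    apply hc0
    have hz0 : b.equivFun.symm (fun i => c (EuclideanSpace.single i 1)) = 0 := by
      rw [Module.Basis.equivFun_symm_apply]
      apply Subtype.ext
      rw [Submodule.coe_sum]
      ext x
      have h1 : c (Q x) = 0 := hc ⟨x, rfl⟩
      have h2 : Q x = ∑ i, (Q x i) • EuclideanSpace.single i (1 : ℝ) := by
        simpa using ((EuclideanSpace.basisFun (Fin n) ℝ).sum_repr (Q x)).symm
      rw [h2, map_sum] at h1
      rw [sum_apply]
      simp only [map_smul, smul_eq_mul] at h1
      refine Eq.trans ?_ h1
      apply Finset.sum_congr rfl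
      intro i _
      rw [hQ, mul_comm]
      rfl
    have hz : ∀ i, c (EuclideanSpace.single i 1) = 0 := by
      intro i
      have := congrArg b.equivFun hz0
      rw [LinearEquiv.apply_symm_apply, map_zero] at this
      exact congrFun this i
    apply (EuclideanSpace.basisFun (Fin n) ℝ).toBasis.ext
    intro i
    simpa using hz i
  obtain ⟨P0, hP0⟩ := (Q : E →ₗ[ℝ] Euc n).ker.exists_isCompl
  let m := Module.finrank ℝ (Q : E →ₗ[ℝ] Euc n).ker
  let i1 : (Q : E →ₗ[ℝ] Euc n).ker ≃L[ℝ] Euc m := ContinuousLinearEquiv.ofFinrankEq (by simp [m])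
  let pr : E →ₗ[ℝ] (Q : E →ₗ[ℝ] Euc n).ker := Submodule.projectionOnto _ _ hP0
  let P : E →L[ℝ] Euc m := (i1 : _ →L[ℝ] _).comp (LinearMap.toContinuousLinearMap pr)
  have hPr : (P : E →ₗ[ℝ] Euc m).range = ⊤ := by
    rw [LinearMap.range_eq_top]
    intro y
    refine ⟨(i1.symm y : E), ?_⟩
    show i1 (pr (i1.symm y : E)) = y
    simp [pr]
  have hPk : (P : E →ₗ[ℝ] Euc m).ker = P0 := by
    ext x
    rw [LinearMap.mem_ker]
    show i1 (pr x) = 0 ↔ _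
    simp [pr]
  let e := ContinuousLinearMap.equivProdOfSurjectiveOfIsCompl P Q hPr hsurj
    (by rw [hPk]; exact hP0.symm)
  have he1 : ∀ x, (e x).1 = P x := fun x => rfl
  have he2 : ∀ x, (e x).2 = Q x := fun x => rfl
  refine ⟨m, e, ?_, ?_⟩
  · intro i
    have : (EuclideanSpace.proj i).comp ((ContinuousLinearMap.snd ℝ _ _).comp
        (e : E →L[ℝ] Euc m × Euc n)) = (b i : E →L[ℝ] ℝ) := by
      ext x; rfl
    rw [this]
    exact (b i).2
  · intro a ha
    ext u
    have h1 := hspan _ ha (e.symm (u, 0)) (by rw [← he2]; simp)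
    simpa using h1

lemma exists_split' [FiniteDimensional ℝ E] (S : Submodule ℝ (E →L[ℝ] ℝ)) :
    ∃ (m n : ℕ) (e : E ≃L[ℝ] Euc m × Euc n), Module.finrank ℝ S = n ∧
      (∀ i, (EuclideanSpace.proj i).comp ((ContinuousLinearMap.snd ℝ _ _).comp
        (e : E →L[ℝ] Euc m × Euc n)) ∈ S) ∧
      ∀ a : Euc m →L[ℝ] ℝ, a.comp ((ContinuousLinearMap.fst ℝ _ _).comp
        (e : E →L[ℝ] Euc m × Euc n)) ∈ S → a = 0 := by
  obtain ⟨m, e, h1, h2⟩ := exists_split S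
  exact ⟨m, _, e, rfl, h1, h2⟩

end Base2

section Base3

variable {E : Type} [NormedAddCommGroup E] [NormedSpace ℝ E]

/-- touching ball gives a one sided functional -/
lemma touching_one {m : ℕ} {N M : Set E} (P : E →L[ℝ] Euc m) {q : E} {z : Euc m}
    (hz : z ≠ P q) (hM : ∀ᶠ x in 𝓝[N] q, x ∈ M) (hmin : ∀ x ∈ M, dist z (P q) ≤ dist z (P x)) :
    OneAt N q ((innerSL ℝ (‖z - P q‖⁻¹ • (z - P q))).comp P) := by
  intro ε hε
  set c : ℝ := ‖z - P q‖ with hc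
  have hc0 : 0 < c := norm_pos_iff.2 (sub_ne_zero.2 hz)
  have hsmall : ∀ᶠ x in 𝓝[N] q, ‖P‖ ^ 2 * ‖x - q‖ < 2 * c * ε := by
    apply Filter.Eventually.filter_mono nhdsWithin_le_nhds
    have : ContinuousAt (fun x : E => ‖P‖ ^ 2 * ‖x - q‖) q := by fun_prop
    apply this.eventually_lt continuousAt_const
    simp
    positivity
  filter_upwards [hM, hsmall] with x hx hs
  have h1 := hmin x hx
  rw [dist_eq_norm, dist_eq_norm] at h1
  have h2 : z - P x = (z - P q) - P (x - q) := by rw [map_sub]; abel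
  have h3 := norm_sub_sq_real (z - P q) (P (x - q))
  rw [← h2] at h3
  have h4 : ‖z - P q‖ ^ 2 ≤ ‖z - P x‖ ^ 2 := by gcongr
  have h5 : ‖P (x - q)‖ ^ 2 ≤ (‖P‖ * ‖x - q‖) ^ 2 := by
    gcongr
    exact P.le_opNorm _
  have h6 : ((innerSL ℝ (c⁻¹ • (z - P q))).comp P) (x - q) = c⁻¹ * inner ℝ (z - P q) (P (x - q)) := by
    rw [ContinuousLinearMap.comp_apply, innerSL_apply_apply, real_inner_smul_left]
  rw [h6, inv_mul_le_iff₀ hc0]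
  have h7 : 0 ≤ ‖x - q‖ := norm_nonneg _
  nlinarith

lemma compact_ball {N : Set E} (h : LocallyCompactSubset N) {p : E} (hp : p ∈ N) {R : ℝ}
    (hR : 0 < R) : ∃ r, 0 < r ∧ r < R ∧ IsCompact (N ∩ closedBall p r) := by
  obtain ⟨K, hKN, hK, U, hU, hxU, hNU⟩ := h p hp
  obtain ⟨s, hs, hsU⟩ := Metric.isOpen_iff.1 hU p hxU
  refine ⟨min s R / 2, by positivity, ?_, ?_⟩
  · have := min_le_right s R; linarith
  · have : N ∩ closedBall p (min s R / 2) = K ∩ closedBall p (min s R / 2) := by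
      ext x
      refine ⟨fun hx => ⟨hNU ⟨hx.1, hsU ?_⟩, hx.2⟩, fun hx => ⟨hKN hx.1, hx.2⟩⟩
      refine closedBall_subset_ball ?_ hx.2
      have := min_le_left s R
      have : 0 < min s R := lt_min hs hR
      linarith
    rw [this]
    exact hK.inter_right isClosed_closedBall

theorem base_case [FiniteDimensional ℝ E] {N : Set E} (hne : N.Nonempty)
    (hloc : LocallyCompactSubset N) (hhom : CkHomogeneous 1 N) : GraphSomewhere 1 N := by
  obtain ⟨p, hp, hone, hclos⟩ := exists_generic hne hloc
  obtain ⟨m, n, e, hn, he1, he2⟩ := exists_split' (AnnAt N p)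
  let P : E →L[ℝ] Euc m := (ContinuousLinearMap.fst ℝ _ _).comp (e : E →L[ℝ] Euc m × Euc n)
  let Q : E →L[ℝ] Euc n := (ContinuousLinearMap.snd ℝ _ _).comp (e : E →L[ℝ] Euc m × Euc n)
  have hPe : ∀ x, P x = (e x).1 := fun x => rfl
  have hQe : ∀ x, Q x = (e x).2 := fun x => rfl
  -- the antilipschitz bound
  obtain ⟨K, R, hK, hR, hlip⟩ : ∃ K R : ℝ, 0 < K ∧ 0 < R ∧ ∀ x ∈ N ∩ ball p R, ∀ y ∈ N ∩ ball p R,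
      ‖x - y‖ ≤ K * ‖P x - P y‖ := by
    have hQo : (fun z : E × E => Q (z.1 - z.2)) =o[𝓝[N ×ˢ N] (p, p)] fun z => z.1 - z.2 := by
      have : ∀ x, Q x = ∑ i, (Q x i) • EuclideanSpace.single i (1 : ℝ) := fun x => by
        simpa using ((EuclideanSpace.basisFun (Fin n) ℝ).sum_repr (Q x)).symm
      rw [show (fun z : E × E => Q (z.1 - z.2)) =
        ∑ i, fun z : E × E => (Q (z.1 - z.2) i) • EuclideanSpace.single i (1 : ℝ) from
          by funext z; rw [Finset.sum_apply]; exact this _]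
      apply IsLittleO.sum
      intro i _
      have h1 : (fun z : E × E => Q (z.1 - z.2) i) =o[𝓝[N ×ˢ N] (p, p)] fun z => z.1 - z.2 :=
        mem_AnnAt.1 (he1 i)
      refine (h1.norm_right.smul_isBigO
        (isBigO_const_const (EuclideanSpace.single i (1 : ℝ)) (one_ne_zero' ℝ) _)).trans_isBigO ?_
      simp only [smul_eq_mul, mul_one]
      exact (isBigO_refl _ _).norm_left
    let C : ℝ := ‖(e.symm : Euc m × Euc n →L[ℝ] E)‖ + 1
    have hC : 0 < C := by positivity
    have h1 := isLittleO_iff.1 hQo (show 0 < 1 / (2 * C) by positivity)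
    rw [eventually_nhdsWithin_iff, Metric.eventually_nhds_iff] at h1
    obtain ⟨R, hR, h1⟩ := h1
    refine ⟨2 * C, R, by positivity, hR, ?_⟩
    intro x hx y hy
    have h2 := h1 (y := (x, y)) (by rw [Prod.dist_eq]; exact max_lt hx.2 hy.2) ⟨hx.1, hy.1⟩
    simp only at h2
    have h3 : ‖x - y‖ ≤ C * ‖e (x - y)‖ := by
      have := (e.symm : Euc m × Euc n →L[ℝ] E).le_opNorm (e (x - y))
      simp only [ContinuousLinearEquiv.coe_coe, ContinuousLinearEquiv.symm_apply_apply] at this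
      refine this.trans ?_
      gcongr
      simp [C]
    have h4 : ‖e (x - y)‖ ≤ ‖P (x - y)‖ + ‖Q (x - y)‖ := by
      rw [Prod.norm_def]
      exact max_le_add_of_nonneg (norm_nonneg _) (norm_nonneg _)
    rw [← map_sub]
    have h5 : C * ‖e (x - y)‖ ≤ C * (‖P (x - y)‖ + 1 / (2 * C) * ‖x - y‖) := by
      gcongr; linarith
    have h6 : C * (‖P (x - y)‖ + 1 / (2 * C) * ‖x - y‖) = C * ‖P (x - y)‖ + ‖x - y‖ / 2 := by
      field_simp
    linarith
  obtain ⟨r, hr, hrR, hcomp⟩ := compact_ball hloc hp hR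
  set M := N ∩ closedBall p r with hM
  have hMR : M ⊆ N ∩ ball p R := fun x hx => ⟨hx.1, closedBall_subset_ball hrR hx.2⟩
  have hlipM : ∀ x ∈ M, ∀ y ∈ M, ‖x - y‖ ≤ K * ‖P x - P y‖ := fun x hx y hy =>
    hlip x (hMR hx) y (hMR hy)
  have hpM : p ∈ M := ⟨hp, mem_closedBall_self hr.le⟩
  have hMnear : ∀ q ∈ N ∩ ball p r, ∀ᶠ x in 𝓝[N] q, x ∈ M := by
    intro q hq
    filter_upwards [self_mem_nhdsWithin, mem_nhdsWithin_of_mem_nhds (isOpen_ball.mem_nhds hq.2)]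
      with x hx hx'
    exact ⟨hx, ball_subset_closedBall hx'⟩
  have hAcomp : IsCompact (P '' M) := hcomp.image P.continuous
  -- the projection is a neighborhood
  have hA : P '' M ∈ 𝓝 (P p) := by
    by_contra hnot
    have key : ∀ i : ℕ, ∃ q ∈ N, dist q p < 1 / ((i : ℝ) + 1) ∧ ∃ w : Euc m, w ∈ sphere (0 : Euc m) 1 ∧
        (innerSL ℝ w).comp P ∈ AnnAt N q := by
      intro i
      set ρ : ℝ := min (1 / ((i : ℝ) + 1)) r with hρ
      have hρ0 : 0 < ρ := lt_min (by positivity) hr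
      have h1 : ¬ ball (P p) (ρ / (2 * K)) ⊆ P '' M := fun hsub =>
        hnot (mem_of_superset (ball_mem_nhds _ (by positivity)) hsub)
      obtain ⟨z, hz, hzA⟩ := not_subset.1 h1
      obtain ⟨a, ⟨q, hq, rfl⟩, hmin⟩ := hAcomp.exists_isMinOn ⟨_, mem_image_of_mem P hpM⟩
        (f := fun a => dist z a) (by fun_prop)
      have hmin' : ∀ x ∈ M, dist z (P q) ≤ dist z (P x) := fun x hx =>
        hmin (mem_image_of_mem P hx)
      have hd : dist q p < ρ := by
        have h2 := hlipM q hq p hpM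
        rw [dist_eq_norm]
        have h3 := hmin' p hpM
        have h4 : dist (P q) (P p) < ρ / (2 * K) + ρ / (2 * K) := by
          have := dist_triangle_left (P q) (P p) z
          rw [mem_ball] at hz
          linarith
        rw [dist_eq_norm] at h4
        calc ‖q - p‖ ≤ K * ‖P q - P p‖ := h2
          _ < K * (ρ / (2 * K) + ρ / (2 * K)) := by gcongr
          _ = ρ := by field_simp; ring
      have hzq : z ≠ P q := by
        rintro rfl
        exact hzA (mem_image_of_mem P hq)
      refine ⟨q, hq.1, hd.trans_le (min_le_left _ _), ‖z - P q‖⁻¹ • (z - P q), ?_, ?_⟩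
      · rw [mem_sphere_zero_iff_norm, norm_smul, norm_inv, norm_norm]
        exact inv_mul_cancel₀ (norm_ne_zero_iff.2 (sub_ne_zero.2 hzq))
      · exact one_ann_all le_rfl hhom hp hq.1 hone _ (touching_one P hzq
          (hMnear q ⟨hq.1, hd.trans_le (min_le_right _ _)⟩) hmin')
    choose q hqN hqp w hw hwann using key
    obtain ⟨w0, hw0, φ, hφ, hlim⟩ := (isCompact_sphere (0 : Euc m) 1).tendsto_subseq hw
    have hann : (innerSL ℝ w0).comp P ∈ AnnAt N p := by
      apply hclos
      intro ε hε
      have hq0 : Tendsto q atTop (𝓝[N] p) := by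
        apply tendsto_nhdsWithin_of_tendsto_nhds_of_eventually_within
        · rw [tendsto_iff_dist_tendsto_zero]
          exact squeeze_zero (fun _ => dist_nonneg) (fun i => (hqp i).le)
            tendsto_one_div_add_atTop_nhds_zero_nat
        · exact Eventually.of_forall hqN
      have hq1 := hq0.comp hφ.tendsto_atTop
      have hl1 : Tendsto (fun i => (innerSL ℝ (w (φ i))).comp P) atTop
          (𝓝 ((innerSL ℝ w0).comp P)) := by
        have hcont : Continuous fun w : Euc m => (innerSL ℝ w).comp P := by fun_prop
        exact (hcont.tendsto w0).comp hlim
      have hl2 := (Metric.tendsto_nhds.1 hl1) ε hε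
      refine hq1.frequently (Eventually.frequently ?_)
      filter_upwards [hl2] with i hi
      rw [dist_eq_norm] at hi
      exact ⟨_, hwann (φ i), hi⟩
    have hz := he2 (innerSL ℝ w0) hann
    have h1 : inner ℝ w0 w0 = (0 : ℝ) := congrArg (fun l : Euc m →L[ℝ] ℝ => l w0) hz
    rw [real_inner_self_eq_norm_sq, mem_sphere_zero_iff_norm.1 hw0] at h1
    norm_num at h1
  -- the section
  have hsec : ∀ a : Euc m, ∃ x, a ∈ P '' M → x ∈ M ∧ P x = a := by
    intro a
    by_cases ha : a ∈ P '' M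
    · obtain ⟨x, hx⟩ := ha
      exact ⟨x, fun _ => hx⟩
    · exact ⟨0, fun h => absurd h ha⟩
  choose g hg using hsec
  have hgu : ∀ x ∈ M, g (P x) = x := by
    intro x hx
    have h1 := hg (P x) (mem_image_of_mem P hx)
    have h2 := hlipM _ h1.1 _ hx
    rw [h1.2, sub_self, norm_zero, mul_zero] at h2
    exact sub_eq_zero.1 (norm_le_zero_iff.1 h2)
  have hglip : ∀ a ∈ P '' M, ∀ b ∈ P '' M, ‖g a - g b‖ ≤ K * ‖a - b‖ := by
    intro a ha b hb
    have := hlipM _ (hg a ha).1 _ (hg b hb).1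
    rwa [(hg a ha).2, (hg b hb).2] at this
  have hgc : ContinuousOn g (P '' M) := by
    have : LipschitzOnWith K.toNNReal g (P '' M) := by
      apply LipschitzOnWith.of_dist_le_mul
      intro a ha b hb
      rw [dist_eq_norm, dist_eq_norm, Real.coe_toNNReal _ hK.le]
      exact hglip a ha b hb
    exact this.continuousOn
  let W : Set (Euc m) := interior (P '' M) ∩ g ⁻¹' (ball p r)
  have hWo : IsOpen W := (hgc.mono interior_subset).isOpen_inter_preimage isOpen_interior isOpen_ball
  have hWA : W ⊆ P '' M := fun a ha => interior_subset ha.1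
  let O : Set (Euc m × Euc n) := {z | z.1 ∈ W ∧ e.symm z ∈ ball p r}
  have hOo : IsOpen O := (hWo.preimage continuous_fst).inter (isOpen_ball.preimage e.symm.continuous)
  refine ⟨m, n, e, W, O, fun a => Q (g a), hWo, hOo, ⟨P p, ?_, ?_⟩, ?_, ?_⟩
  · exact mem_interior_iff_mem_nhds.2 hA
  · rw [mem_preimage]
    rw [hgu p hpM]
    exact mem_ball_self hr
  · apply contDiffOn_one_of_strict hWo
    intro a ha
    have hAa : P '' M ∈ 𝓝 a := mem_interior_iff_mem_nhds.1 ha.1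
    set q := g a with hq
    have hqM := (hg a (hWA ha)).1
    have hgt : Tendsto (fun z : Euc m × Euc m => (g z.1, g z.2)) (𝓝 (a, a)) (𝓝[N ×ˢ N] (q, q)) := by
      apply tendsto_nhdsWithin_of_tendsto_nhds_of_eventually_within
      · have hca := hgc.continuousAt hAa
        exact (ContinuousAt.comp' (f := fun z : Euc m × Euc m => z.1) (x := (a, a)) hca
          continuousAt_fst).prodMk (ContinuousAt.comp' (f := fun z : Euc m × Euc m => z.2)
            (x := (a, a)) hca continuousAt_snd)
      · filter_upwards [prod_mem_nhds hAa hAa] with z hz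
        exact ⟨(hg _ hz.1).1.1, (hg _ hz.2).1.1⟩
    have hgO : (fun z : Euc m × Euc m => g z.1 - g z.2) =O[𝓝 (a, a)] fun z => z.1 - z.2 := by
      apply IsBigO.of_bound K
      filter_upwards [prod_mem_nhds hAa hAa] with z hz
      exact hglip _ hz.1 _ hz.2
    have hann : ∀ l ∈ AnnAt N q,
        (fun z : Euc m × Euc m => l (g z.1 - g z.2)) =o[𝓝 (a, a)] fun z => z.1 - z.2 := by
      intro l hl
      exact ((mem_AnnAt.1 hl).comp_tendsto hgt).trans_isBigO hgO
    -- the restriction map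
    let ι1 : Euc m →L[ℝ] E := (e.symm : Euc m × Euc n →L[ℝ] E).comp (ContinuousLinearMap.inl ℝ _ _)
    let ι2 : Euc n →L[ℝ] E := (e.symm : Euc m × Euc n →L[ℝ] E).comp (ContinuousLinearMap.inr ℝ _ _)
    have hdec : ∀ x, x = ι1 (P x) + ι2 (Q x) := by
      intro x
      apply e.injective
      simp [ι1, ι2, hPe, hQe]
    have hexp : ∀ (l : E →L[ℝ] ℝ) (v : Euc n),
        l (ι2 v) = ∑ j, v j * l (ι2 (EuclideanSpace.single j 1)) := by
      intro l v
      have : v = ∑ i, (v i) • EuclideanSpace.single i (1 : ℝ) := by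
        simpa using ((EuclideanSpace.basisFun (Fin n) ℝ).sum_repr v).symm
      conv_lhs => rw [this]
      simp only [map_sum, map_smul, smul_eq_mul]
    let T : (AnnAt N q) →ₗ[ℝ] (Fin n → ℝ) :=
      { toFun := fun l i => (l : E →L[ℝ] ℝ) (ι2 (EuclideanSpace.single i 1))
        map_add' := fun _ _ => rfl
        map_smul' := fun _ _ => rfl }
    have hfin : Module.finrank ℝ (AnnAt N q) = n := by
      rw [← hn]
      exact le_antisymm (ann_finrank_le le_rfl hhom hp hqM.1) (ann_finrank_le le_rfl hhom hqM.1 hp)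
    have hTinj : Function.Injective T := by
      intro l1 l2 hl
      rw [← sub_eq_zero, ← map_sub] at hl
      rw [← sub_eq_zero]
      set l := l1 - l2
      have hl2 : ∀ v, (l : E →L[ℝ] ℝ) (ι2 v) = 0 := fun v => by
        rw [hexp]
        apply Finset.sum_eq_zero
        intro j _
        have : (l : E →L[ℝ] ℝ) (ι2 (EuclideanSpace.single j 1)) = 0 := congrFun hl j
        rw [this, mul_zero]
      have h0 := hann l l.2
      have h1 : HasStrictFDerivAt (fun _ : Euc m => (0 : ℝ)) ((l : E →L[ℝ] ℝ).comp ι1) a := by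
        apply HasStrictFDerivAt.of_isLittleO
        refine (h0.neg_left).congr' ?_ EventuallyEq.rfl
        filter_upwards [prod_mem_nhds hAa hAa] with z hz
        rw [hdec (g z.1 - g z.2), map_add, hl2, map_sub P, (hg _ hz.1).2, (hg _ hz.2).2]
        simp
      have h2 := h1.hasFDerivAt.unique (hasFDerivAt_const (0 : ℝ) a)
      apply Subtype.ext
      ext x
      rw [hdec x, map_add, hl2]
      have := congrArg (fun l : Euc m →L[ℝ] ℝ => l (P x)) h2
      simpa using this
    have hTsurj : Function.Surjective T := by
      rw [← LinearMap.range_eq_top]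
      apply Submodule.eq_top_of_finrank_eq
      rw [LinearMap.finrank_range_of_inj hTinj, hfin]
      simp
    have hcoord : ∀ i : Fin n, ∃ l ∈ AnnAt N q, ∀ v, l (ι2 v) = v i := by
      intro i
      obtain ⟨l, hl⟩ := hTsurj (Pi.single i 1)
      refine ⟨l, l.2, fun v => ?_⟩
      rw [hexp]
      have h1 : ∀ j, (l : E →L[ℝ] ℝ) (ι2 (EuclideanSpace.single j 1)) = (Pi.single i (1 : ℝ) : Fin n → ℝ) j :=
        fun j => congrFun hl j
      simp only [h1, Pi.single_apply]
      simp
    choose l hl hl2 using hcoord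
    let D : Euc m →L[ℝ] Euc n :=
      ((EuclideanSpace.equiv (Fin n) ℝ).symm : (Fin n → ℝ) →L[ℝ] Euc n).comp
        (ContinuousLinearMap.pi fun i => -((l i).comp ι1))
    refine ⟨D, hasStrictFDerivAt_euclidean.2 fun i => ?_⟩
    apply HasStrictFDerivAt.of_isLittleO
    refine (hann (l i) (hl i)).congr' ?_ EventuallyEq.rfl
    filter_upwards [prod_mem_nhds hAa hAa] with z hz
    rw [hdec (g z.1 - g z.2), map_add, hl2, map_sub P, (hg _ hz.1).2, (hg _ hz.2).2, map_sub Q]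
    have : (PiLp.proj 2 (fun _ : Fin n => ℝ) i ∘L D) (z.1 - z.2) = -(l i (ι1 (z.1 - z.2))) := rfl
    rw [this, PiLp.sub_apply]
    ring
  · intro z
    constructor
    · rintro ⟨hzN, hzW, hzb⟩
      refine ⟨hzW, ?_⟩
      have hzM : e.symm z ∈ M := ⟨hzN, ball_subset_closedBall hzb⟩
      have h1 := hgu _ hzM
      have h2 : P (e.symm z) = z.1 := by simp [hPe]
      rw [h2] at h1
      show z.2 = Q (g z.1)
      rw [h1, hQe]
      simp
    · rintro ⟨hzW, hz2⟩
      have h1 := hg z.1 (hWA hzW)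
      have h2 : e.symm z = g z.1 := by
        rw [ContinuousLinearEquiv.symm_apply_eq]
        ext1
        · rw [← hPe, h1.2]
        · rw [hz2, ← hQe]
      refine ⟨?_, hzW, ?_⟩
      · rw [h2]; exact h1.1.1
      · rw [h2]; exact hzW.2

end Base3

section Inv

lemma exists_loc_inv {F F' : Type*} [NormedAddCommGroup F] [NormedSpace ℝ F]
    [NormedAddCommGroup F'] [NormedSpace ℝ F'] [CompleteSpace F'] {k : ℕ} (hk : 1 ≤ k)
    {f : F' → F} {A : F' ≃L[ℝ] F} {a : F'} (hf : ContDiffAt ℝ k f a)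
    (hA : HasFDerivAt f (A : F' →L[ℝ] F) a) :
    ∃ g : F → F', g (f a) = a ∧ ContDiffAt ℝ k g (f a) ∧ (∀ᶠ y in 𝓝 (f a), f (g y) = y) := by
  have hn : (k : WithTop ℕ∞) ≠ 0 := by
    have : k ≠ 0 := by omega
    exact_mod_cast this
  exact ⟨hf.localInverse hA hn, hf.localInverse_apply_image hA hn, hf.to_localInverse hA hn,
    (hf.hasStrictFDerivAt' hA hn).eventually_right_inverse⟩

variable {F F' : Type*} [NormedAddCommGroup F] [NormedSpace ℝ F] [FiniteDimensional ℝ F]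
    [NormedAddCommGroup F'] [NormedSpace ℝ F'] [FiniteDimensional ℝ F']

lemma exists_ker_trivial {θ : F' → F} {W : Set F'} (hW : IsOpen W) (hne : W.Nonempty)
    (hθ : ContDiffOn ℝ 1 θ W) (hinj : InjOn θ W) :
    ∃ u ∈ W, Function.Injective (fderiv ℝ θ u) := by
  have hdiff : ∀ v ∈ W, HasFDerivAt θ (fderiv ℝ θ v) v := fun v hv =>
    ((hθ.contDiffAt (hW.mem_nhds hv)).differentiableAt one_ne_zero).hasFDerivAt
  -- a point of maximal rank
  obtain ⟨u, hu, hmax⟩ : ∃ u ∈ W, ∀ v ∈ W,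
      Module.finrank ℝ (LinearMap.range (fderiv ℝ θ v : F' →ₗ[ℝ] F)) ≤
      Module.finrank ℝ (LinearMap.range (fderiv ℝ θ u : F' →ₗ[ℝ] F)) := by
    have hfin : ((fun v => Module.finrank ℝ (LinearMap.range (fderiv ℝ θ v : F' →ₗ[ℝ] F))) ''
        W).Finite := by
      apply (Set.finite_Iic (Module.finrank ℝ F)).subset
      rintro _ ⟨v, _, rfl⟩
      exact Submodule.finrank_le _
    obtain ⟨_, ⟨u, hu, rfl⟩, h⟩ := hfin.exists_maximal (hne.image _)
    exact ⟨u, hu, fun v hv => (le_total _ _).elim id fun hh => h ⟨v, hv, rfl⟩ hh⟩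
  refine ⟨u, hu, ?_⟩
  set A := fderiv ℝ θ u with hA
  let R := LinearMap.range (A : F' →ₗ[ℝ] F)
  let K := LinearMap.ker (A : F' →ₗ[ℝ] F)
  obtain ⟨Q, hQ⟩ : R.ClosedComplemented := Submodule.ClosedComplemented.of_finiteDimensional R
  obtain ⟨π, hπ⟩ : K.ClosedComplemented := Submodule.ClosedComplemented.of_finiteDimensional K
  let B : F' →L[ℝ] R × K := (Q.comp A).prod π
  have hBinj : Function.Injective B := by
    rw [injective_iff_map_eq_zero]
    intro x hx
    have h1 : Q (A x) = 0 := congrArg Prod.fst hx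
    have h2 : π x = 0 := congrArg Prod.snd hx
    have h3 := hQ ⟨A x, ⟨x, rfl⟩⟩
    have h4 : A x = 0 := by
      have := h3.symm.trans h1
      exact congrArg Subtype.val this
    have h5 := hπ ⟨x, h4⟩
    exact congrArg Subtype.val (h5.symm.trans h2)
  have hdim : Module.finrank ℝ F' = Module.finrank ℝ (R × K) := by
    rw [Module.finrank_prod, LinearMap.finrank_range_add_finrank_ker]
  let Be : F' ≃L[ℝ] R × K :=
    (LinearMap.linearEquivOfInjective (B : F' →ₗ[ℝ] R × K) hBinj hdim).toContinuousLinearEquiv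
  have hBe : (Be : F' →L[ℝ] R × K) = B := by ext1 x; rfl
  let Φ : F' → R × K := fun x => (Q (θ x), π x)
  have hΦd : ∀ v ∈ W, HasFDerivAt Φ ((Q.comp (fderiv ℝ θ v)).prod π) v := fun v hv =>
    (Q.hasFDerivAt.comp v (hdiff v hv)).prodMk π.hasFDerivAt
  have hΦc : ContDiffAt ℝ (1 : ℕ) Φ u :=
    (Q.contDiff.contDiffAt.comp u (hθ.contDiffAt (hW.mem_nhds hu))).prodMk π.contDiff.contDiffAt
  have hΦu : HasFDerivAt Φ (Be : F' →L[ℝ] R × K) u := by rw [hBe]; exact hΦd u hu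
  obtain ⟨Ψ, hΨu, hΨc, hΨ⟩ := exists_loc_inv le_rfl hΦc hΦu
  have hΨW : ∀ᶠ y in 𝓝 (Φ u), Ψ y ∈ W :=
    hΨc.continuousAt.eventually (by rw [hΨu]; exact hW.mem_nhds hu)
  have hΨd : ∀ᶠ y in 𝓝 (Φ u), ContDiffAt ℝ (1 : ℕ) Ψ y := hΨc.eventually (by simp)
  obtain ⟨ε, hε, hball⟩ := Metric.eventually_nhds_iff_ball.1
    (hΨ.eventually_nhds.and (hΨW.and hΨd))
  have key : ∀ y ∈ ball (Φ u) ε, ∀ k : K, fderiv ℝ θ (Ψ y) (fderiv ℝ Ψ y (0, k)) = 0 := by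
    intro y hy k
    obtain ⟨h1, h2, h3⟩ := hball y hy
    have h4 : HasFDerivAt Ψ (fderiv ℝ Ψ y) y := (h3.differentiableAt (by simp)).hasFDerivAt
    have h5 := (hΦd _ h2).comp y h4
    have h6 : ((Q.comp (fderiv ℝ θ (Ψ y))).prod π).comp (fderiv ℝ Ψ y) =
        ContinuousLinearMap.id ℝ _ :=
      (h5.congr_of_eventuallyEq (f₁ := id) (h1.mono fun z hz => hz.symm)).unique (hasFDerivAt_id y)
    have h7 : ∀ z : R × K, Q (fderiv ℝ θ (Ψ y) (fderiv ℝ Ψ y z)) = z.1 := fun z =>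
      congrArg (fun T : R × K →L[ℝ] R × K => (T z).1) h6
    let R' := LinearMap.range (fderiv ℝ θ (Ψ y) : F' →ₗ[ℝ] F)
    let q : R' →ₗ[ℝ] R := (Q : F →ₗ[ℝ] R).comp R'.subtype
    have hqs : Function.Surjective q := fun r =>
      ⟨⟨fderiv ℝ θ (Ψ y) (fderiv ℝ Ψ y (r, 0)), ⟨_, rfl⟩⟩, h7 (r, 0)⟩
    have hqd : Module.finrank ℝ R' = Module.finrank ℝ R :=
      le_antisymm (hmax _ h2) (LinearMap.finrank_le_finrank_of_surjective hqs)
    have hqi : Function.Injective q := (LinearMap.injective_iff_surjective_of_finrank_eq_finrank hqd).2 hqs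
    have h8 : q ⟨fderiv ℝ θ (Ψ y) (fderiv ℝ Ψ y (0, k)), ⟨_, rfl⟩⟩ = q 0 := by
      rw [map_zero]; exact h7 (0, k)
    exact congrArg Subtype.val (hqi h8)
  -- constancy along the kernel
  let ι : K → R × K := fun k => Φ u + (0, k)
  have hι : ∀ k ∈ ball (0 : K) ε, ι k ∈ ball (Φ u) ε := by
    intro k hk
    have : ‖k‖ < ε := by simpa using hk
    simpa [ι, dist_eq_norm, Prod.norm_def] using this
  have hιd : ∀ k, HasFDerivAt ι (ContinuousLinearMap.inr ℝ R K) k := fun k =>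
    (ContinuousLinearMap.inr ℝ R K).hasFDerivAt.const_add _
  have hcomp : ∀ k ∈ ball (0 : K) ε, HasFDerivAt (fun k => θ (Ψ (ι k))) (0 : K →L[ℝ] F) k := by
    intro k hk
    obtain ⟨h1, h2, h3⟩ := hball _ (hι k hk)
    have h4 : HasFDerivAt Ψ (fderiv ℝ Ψ (ι k)) (ι k) := (h3.differentiableAt (by simp)).hasFDerivAt
    have := (hdiff _ h2).comp k (h4.comp k (hιd k))
    exact this.congr_fderiv (ContinuousLinearMap.ext fun w => key _ (hι k hk) w)
  have hconst : ∀ k ∈ ball (0 : K) ε, θ (Ψ (ι k)) = θ (Ψ (ι 0)) := fun k hk =>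
    Metric.isOpen_ball.is_const_of_fderiv_eq_zero (𝕜 := ℝ) (convex_ball _ _).isPreconnected
      (fun x hx => (hcomp x hx).differentiableAt.differentiableWithinAt)
      (fun x hx => (hcomp x hx).fderiv) hk (mem_ball_self hε)
  have hzero : ∀ k ∈ ball (0 : K) ε, k = 0 := by
    intro k hk
    have h1 := hball _ (hι k hk)
    have h2 := hball _ (hι 0 (mem_ball_self hε))
    have h3 := hinj h1.2.1 h2.2.1 (hconst k hk)
    have h4 : ι k = ι 0 := by rw [← h1.1.self_of_nhds, h3, h2.1.self_of_nhds]
    have h5 := congrArg Prod.snd (add_left_cancel h4)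
    exact h5
  rw [injective_iff_map_eq_zero]
  intro x hx
  by_contra hne
  let k : K := ⟨x, hx⟩
  have hk : k ≠ 0 := fun h => hne (congrArg Subtype.val h)
  have hkn : 0 < ‖k‖ := norm_pos_iff.2 hk
  have := hzero ((ε / 2 / ‖k‖) • k) (by
    rw [mem_ball_zero_iff, norm_smul, Real.norm_of_nonneg (by positivity), div_mul_cancel₀ _ hkn.ne']
    linarith)
  rw [smul_eq_zero] at this
  rcases this with h | h
  · have : 0 < ε / 2 / ‖k‖ := by positivity
    linarith
  · exact hk h

lemma exists_bij {θ : F' → F} {W : Set F'} (hW : IsOpen W) (hne : W.Nonempty)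
    (hθ : ContDiffOn ℝ 1 θ W) (hinj : InjOn θ W) (ho : IsOpen (θ '' W)) :
    ∃ u ∈ W, ∃ A : F' ≃L[ℝ] F, HasFDerivAt θ (A : F' →L[ℝ] F) u := by
  obtain ⟨u, hu, hi⟩ := exists_ker_trivial hW hne hθ hinj
  have h1 : dimH (θ '' W) ≤ dimH W := by
    apply dimH_image_le_of_locally_lipschitzOn
    intro x hx
    obtain ⟨C, t, ht, h⟩ := (hθ.contDiffAt (hW.mem_nhds hx)).exists_lipschitzOnWith
    exact ⟨C, t, mem_nhdsWithin_of_mem_nhds ht, h⟩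
  rw [Real.dimH_of_mem_nhds (ho.mem_nhds (mem_image_of_mem θ hu)),
    Real.dimH_of_mem_nhds (hW.mem_nhds hu)] at h1
  have h1' : Module.finrank ℝ F ≤ Module.finrank ℝ F' := by exact_mod_cast h1
  have h2 : Module.finrank ℝ F' ≤ Module.finrank ℝ F :=
    LinearMap.finrank_le_finrank_of_injective (f := (fderiv ℝ θ u : F' →ₗ[ℝ] F)) hi
  refine ⟨u, hu, (LinearMap.linearEquivOfInjective (fderiv ℝ θ u : F' →ₗ[ℝ] F) hi
    (le_antisymm h2 h1')).toContinuousLinearEquiv, ?_⟩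
  have := ((hθ.contDiffAt (hW.mem_nhds hu)).differentiableAt one_ne_zero).hasFDerivAt
  exact this.congr_fderiv (ContinuousLinearMap.ext fun w => rfl)

end Inv

section Lift

lemma IsCkDiffeoOn.symm' {E F : Type*} [NormedAddCommGroup E] [NormedSpace ℝ E]
    [NormedAddCommGroup F] [NormedSpace ℝ F] {k : ℕ} {H : E → F} {H' : F → E} {U : Set E} {V : Set F}
    (h : IsCkDiffeoOn k H H' U V) : IsCkDiffeoOn k H' H V U :=
  ⟨h.2.1, h.1, h.2.2.2.1, h.2.2.1, h.2.2.2.2.2.1, h.2.2.2.2.1, h.2.2.2.2.2.2.2, h.2.2.2.2.2.2.1⟩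

lemma IsCkDiffeoOn.trans' {E F G : Type*} [NormedAddCommGroup E] [NormedSpace ℝ E]
    [NormedAddCommGroup F] [NormedSpace ℝ F] [NormedAddCommGroup G] [NormedSpace ℝ G]
    {k : ℕ} {H : E → F} {H' : F → E} {U : Set E} {V : Set F}
    {I : F → G} {I' : G → F} {V₁ : Set F} {X : Set G}
    (h : IsCkDiffeoOn k H H' U V) (i : IsCkDiffeoOn k I I' V₁ X) :
    IsCkDiffeoOn k (I ∘ H) (H' ∘ I') (U ∩ H ⁻¹' V₁) (X ∩ I' ⁻¹' V) := by
  obtain ⟨h1, h2, h3, h4, h5, h6, h7, h8⟩ := h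
  obtain ⟨i1, i2, i3, i4, i5, i6, i7, i8⟩ := i
  refine ⟨h3.continuousOn.isOpen_inter_preimage h1 i1, i4.continuousOn.isOpen_inter_preimage i2 h2,
    i3.comp (h3.mono inter_subset_left) (fun x hx => hx.2),
    h4.comp (i4.mono inter_subset_left) (fun x hx => hx.2), ?_, ?_, ?_, ?_⟩
  · rintro x ⟨hx, hx'⟩
    refine ⟨i5 hx', ?_⟩
    show I' (I (H x)) ∈ V
    rw [i7 _ hx']; exact h5 hx
  · rintro x ⟨hx, hx'⟩
    refine ⟨h6 hx', ?_⟩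
    show H (H' (I' x)) ∈ V₁
    rw [h8 _ hx']; exact i6 hx
  · rintro x ⟨hx, hx'⟩
    show H' (I' (I (H x))) = x
    rw [i7 _ hx', h7 _ hx]
  · rintro x ⟨hx, hx'⟩
    show I (H (H' (I' x))) = x
    rw [h8 _ hx', i8 _ hx]

lemma IsCkDiffeoOn.image_iff' {E F : Type*} [NormedAddCommGroup E] [NormedSpace ℝ E]
    [NormedAddCommGroup F] [NormedSpace ℝ F] {k : ℕ} {H : E → F} {H' : F → E} {U : Set E} {V : Set F}
    (h : IsCkDiffeoOn k H H' U V) {N : Set E} {M : Set F} :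
    H '' (N ∩ U) = M ∩ V ↔ ∀ x ∈ U, (x ∈ N ↔ H x ∈ M) := by
  obtain ⟨h1, h2, h3, h4, h5, h6, h7, h8⟩ := h
  constructor
  · intro hi x hx
    constructor
    · intro hN
      exact (hi.subset (mem_image_of_mem H ⟨hN, hx⟩)).1
    · intro hM
      obtain ⟨y, ⟨hy, hyU⟩, hyx⟩ := hi.superset ⟨hM, h5 hx⟩
      rw [← h7 x hx, ← hyx, h7 y hyU]
      exact hy
  · intro hi
    ext y
    constructor
    · rintro ⟨x, ⟨hx, hxU⟩, rfl⟩
      exact ⟨(hi x hxU).1 hx, h5 hxU⟩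
    · rintro ⟨hy, hyV⟩
      refine ⟨H' y, ⟨(hi _ (h6 hyV)).2 ?_, h6 hyV⟩, h8 y hyV⟩
      rwa [h8 y hyV]

lemma CkHomogeneous.inter {E : Type*} [NormedAddCommGroup E] [NormedSpace ℝ E] {k : ℕ}
    {N O : Set E} (h : CkHomogeneous k N) (hO : IsOpen O) : CkHomogeneous k (N ∩ O) := by
  rintro x ⟨hx, hxO⟩ y ⟨hy, hyO⟩
  obtain ⟨U, V, H, H', hd, hxU, hyV, hxy, hi⟩ := h x hx y hy
  rw [hd.image_iff'] at hi
  obtain ⟨h1, h2, h3, h4, h5, h6, h7, h8⟩ := hd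
  have hyx : H' y = x := by rw [← hxy, h7 x hxU]
  have hd' : IsCkDiffeoOn k H H' (U ∩ O ∩ H ⁻¹' O) (V ∩ O ∩ H' ⁻¹' O) := by
    refine ⟨(h3.mono inter_subset_left).continuousOn.isOpen_inter_preimage (h1.inter hO) hO,
      (h4.mono inter_subset_left).continuousOn.isOpen_inter_preimage (h2.inter hO) hO,
      h3.mono (inter_subset_left.trans inter_subset_left),
      h4.mono (inter_subset_left.trans inter_subset_left), ?_, ?_, fun x hx => h7 x hx.1.1,
      fun x hx => h8 x hx.1.1⟩
    · rintro z ⟨⟨hz, hzO⟩, hz'⟩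
      exact ⟨⟨h5 hz, hz'⟩, by rwa [mem_preimage, h7 z hz]⟩
    · rintro z ⟨⟨hz, hzO⟩, hz'⟩
      exact ⟨⟨h6 hz, hz'⟩, by rwa [mem_preimage, h8 z hz]⟩
  refine ⟨_, _, H, H', hd', ⟨⟨hxU, hxO⟩, by rwa [mem_preimage, hxy]⟩,
    ⟨⟨hyV, hyO⟩, by rwa [mem_preimage, hyx]⟩, hxy, hd'.image_iff'.2 ?_⟩
  rintro z ⟨⟨hz, hzO⟩, hz'⟩
  exact ⟨fun hh => ⟨(hi z hz).1 hh.1, hz'⟩, fun hh => ⟨(hi z hz).2 hh.1, hzO⟩⟩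

lemma CkHomogeneous.map_equiv {E F : Type*} [NormedAddCommGroup E] [NormedSpace ℝ E]
    [NormedAddCommGroup F] [NormedSpace ℝ F] {k : ℕ} {N : Set E} (h : CkHomogeneous k N)
    (e : E ≃L[ℝ] F) : CkHomogeneous k (e.symm ⁻¹' N) := by
  intro x hx y hy
  obtain ⟨U, V, H, H', hd, hxU, hyV, hxy, hi⟩ := h _ hx _ hy
  rw [hd.image_iff'] at hi
  have he : IsCkDiffeoOn k e e.symm univ univ :=
    ⟨isOpen_univ, isOpen_univ, e.contDiff.contDiffOn, e.symm.contDiff.contDiffOn,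
      mapsTo_univ _ _, mapsTo_univ _ _, fun x _ => e.symm_apply_apply x,
      fun x _ => e.apply_symm_apply x⟩
  have hd' := (he.symm'.trans' hd).trans' he
  refine ⟨_, _, _, _, hd', by simpa using hxU, by simpa using hyV, ?_, hd'.image_iff'.2 ?_⟩
  · simp [hxy]
  · rintro z ⟨⟨_, hz⟩, _⟩
    simpa using hi _ hz

variable {F G : Type} [NormedAddCommGroup F] [NormedSpace ℝ F] 
  [NormedAddCommGroup G] [NormedSpace ℝ G]

/-- the derivative along the graph of `A` -/
def liftT (H : F × G → F × G) (p : (F × G) × (F →L[ℝ] G)) : F →L[ℝ] F × G :=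
  (fderiv ℝ H p.1).comp (ContinuousLinearMap.inl ℝ F G + (ContinuousLinearMap.inr ℝ F G).comp p.2)

/-- first component of `liftT` -/
def gliftM (H : F × G → F × G) (p : (F × G) × (F →L[ℝ] G)) : F →L[ℝ] F :=
  (ContinuousLinearMap.fst ℝ F G).comp (liftT H p)

/-- prolongation of `H` to planes -/
def liftH (H : F × G → F × G) (p : (F × G) × (F →L[ℝ] G)) : (F × G) × (F →L[ℝ] G) :=
  (H p.1, ((ContinuousLinearMap.snd ℝ F G).comp (liftT H p)).comp
    (ContinuousLinearMap.inverse (gliftM H p)))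

/-- domain of the prolongation -/
def liftU (H : F × G → F × G) (U : Set (F × G)) : Set ((F × G) × (F →L[ℝ] G)) :=
  {p | p.1 ∈ U ∧ ∃ M : F ≃L[ℝ] F, (M : F →L[ℝ] F) = gliftM H p}

lemma liftT_apply (H : F × G → F × G) (p : (F × G) × (F →L[ℝ] G)) (v : F) :
    liftT H p v = fderiv ℝ H p.1 (v, p.2 v) := by
  show fderiv ℝ H p.1 ((v, 0) + (0, p.2 v)) = _
  simp only [Prod.mk_add_mk, add_zero, zero_add]

lemma contDiffAt_liftT {k : ℕ} {H : F × G → F × G} {p : (F × G) × (F →L[ℝ] G)}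
    (h : ContDiffAt ℝ (k + 1 : ℕ) H p.1) : ContDiffAt ℝ k (liftT H) p := by
  have h1 : ContDiffAt ℝ k (fderiv ℝ H) p.1 := h.fderiv_right (by push_cast; exact le_rfl)
  have h2 : ContDiffAt ℝ k (fun p : (F × G) × (F →L[ℝ] G) => fderiv ℝ H p.1) p :=
    h1.comp p contDiffAt_fst
  exact h2.clm_comp (contDiffAt_const.add (contDiffAt_const.clm_comp contDiffAt_snd))

lemma contDiffAt_gliftM {k : ℕ} {H : F × G → F × G} {p : (F × G) × (F →L[ℝ] G)}
    (h : ContDiffAt ℝ (k + 1 : ℕ) H p.1) : ContDiffAt ℝ k (gliftM H) p :=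
  contDiffAt_const.clm_comp (contDiffAt_liftT h)

lemma lift_one_side {H H' : F × G → F × G} {U V : Set (F × G)} {k : ℕ}
    (h : IsCkDiffeoOn (k + 1) H H' U V) {p : (F × G) × (F →L[ℝ] G)} (hp : p ∈ liftU H U) :
    liftH H p ∈ liftU H' V ∧ liftH H' (liftH H p) = p := by
  obtain ⟨h1, h2, h3, h4, h5, h6, h7, h8⟩ := h
  obtain ⟨hpU, M, hM⟩ := hp
  have hk : ((k + 1 : ℕ) : WithTop ℕ∞) ≠ 0 := by simp
  have hD : HasFDerivAt H (fderiv ℝ H p.1) p.1 :=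
    ((h3.contDiffAt (h1.mem_nhds hpU)).differentiableAt hk).hasFDerivAt
  have hD' : HasFDerivAt H' (fderiv ℝ H' (H p.1)) (H p.1) :=
    ((h4.contDiffAt (h2.mem_nhds (h5 hpU))).differentiableAt hk).hasFDerivAt
  have hid : ∀ v, fderiv ℝ H' (H p.1) (fderiv ℝ H p.1 v) = v := by
    have := (hD'.comp p.1 hD).congr_of_eventuallyEq (f₁ := id)
      (by filter_upwards [h1.mem_nhds hpU] with x hx using (h7 x hx).symm)
    intro v
    exact congrArg (fun T : F × G →L[ℝ] F × G => T v) (this.unique (hasFDerivAt_id p.1))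
  set A' := (liftH H p).2 with hA'
  have hinv : ContinuousLinearMap.inverse (gliftM H p) = (M.symm : F →L[ℝ] F) := by
    rw [← hM, ContinuousLinearMap.inverse_equiv]
  have hA'v : ∀ v, A' v = (liftT H p (M.symm v)).2 := by
    intro v
    show (((ContinuousLinearMap.snd ℝ F G).comp (liftT H p)).comp
      (ContinuousLinearMap.inverse (gliftM H p))) v = _
    rw [hinv]; rfl
  have hMv : ∀ v, (liftT H p (M.symm v)).1 = v := by
    intro v
    have : gliftM H p (M.symm v) = v := by rw [← hM]; simp
    exact this
  have hT' : ∀ v, liftT H' (liftH H p) v = (M.symm v, p.2 (M.symm v)) := by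
    intro v
    rw [liftT_apply]
    show fderiv ℝ H' (H p.1) (v, A' v) = _
    have : (v, A' v) = fderiv ℝ H p.1 (M.symm v, p.2 (M.symm v)) := by
      rw [← liftT_apply]
      exact Prod.ext (hMv v).symm (hA'v v)
    rw [this, hid]
  have hM' : (M.symm : F →L[ℝ] F) = gliftM H' (liftH H p) := by
    ext v
    show M.symm v = (liftT H' (liftH H p) v).1
    rw [hT']
  refine ⟨⟨h5 hpU, M.symm, hM'⟩, Prod.ext (h7 _ hpU) ?_⟩
  show (((ContinuousLinearMap.snd ℝ F G).comp (liftT H' (liftH H p))).comp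
      (ContinuousLinearMap.inverse (gliftM H' (liftH H p)))) = p.2
  rw [← hM', ContinuousLinearMap.inverse_equiv]
  ext v
  show (liftT H' (liftH H p) (M.symm.symm v)).2 = _
  rw [hT']
  simp

lemma liftU_open_contDiff [CompleteSpace F] {H H' : F × G → F × G} {U V : Set (F × G)} {k : ℕ}
    (h : IsCkDiffeoOn (k + 1) H H' U V) :
    IsOpen (liftU H U) ∧ ContDiffOn ℝ k (liftH H) (liftU H U) := by
  obtain ⟨h1, h2, h3, h4, h5, h6, h7, h8⟩ := h
  have hc : ∀ p : (F × G) × (F →L[ℝ] G), p.1 ∈ U → ContDiffAt ℝ (k + 1 : ℕ) H p.1 :=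
    fun p hp => h3.contDiffAt (h1.mem_nhds hp)
  constructor
  · have hU : IsOpen ((Prod.fst : (F × G) × (F →L[ℝ] G) → F × G) ⁻¹' U) :=
      h1.preimage continuous_fst
    have := ContinuousOn.isOpen_inter_preimage (f := gliftM H)
      (fun p hp => (contDiffAt_gliftM (hc p hp)).continuousAt.continuousWithinAt) hU
      (ContinuousLinearEquiv.isOpen (𝕜 := ℝ) (E := F) (F := F))
    exact this
  · rintro p ⟨hp, M, hM⟩
    apply ContDiffAt.contDiffWithinAt
    have h0 : ContDiffAt ℝ k H p.1 := (hc p hp).of_le (by exact_mod_cast Nat.le_succ k)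
    have h9 : ContDiffAt ℝ k (fun p : (F × G) × (F →L[ℝ] G) => H p.1) p := h0.comp p contDiffAt_fst
    refine h9.prodMk ((contDiffAt_const.clm_comp (contDiffAt_liftT (hc p hp))).clm_comp ?_)
    have h10 : ContDiffAt ℝ k (ContinuousLinearMap.inverse : (F →L[ℝ] F) → F →L[ℝ] F)
        (gliftM H p) := by
      rw [← hM]; exact contDiffAt_map_inverse M
    exact h10.comp p (contDiffAt_gliftM (hc p hp))

lemma lift_diffeo [CompleteSpace F] {H H' : F × G → F × G} {U V : Set (F × G)} {k : ℕ}
    (h : IsCkDiffeoOn (k + 1) H H' U V) :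
    IsCkDiffeoOn k (liftH H) (liftH H') (liftU H U) (liftU H' V) :=
  ⟨(liftU_open_contDiff h).1, (liftU_open_contDiff h.symm').1, (liftU_open_contDiff h).2,
    (liftU_open_contDiff h.symm').2, fun _ hp => (lift_one_side h hp).1,
    fun _ hp => (lift_one_side h.symm' hp).1, fun _ hp => (lift_one_side h hp).2,
    fun _ hp => (lift_one_side h.symm' hp).2⟩

/-- the graph -/
def graphSet (W : Set F) (f : F → G) : Set (F × G) := {z | z.1 ∈ W ∧ z.2 = f z.1}

/-- the section of the bundle of planes -/
def sig (f : F → G) (x : F) : (F × G) × (F →L[ℝ] G) := ((x, f x), fderiv ℝ f x)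

lemma lift_sig [FiniteDimensional ℝ F] {W : Set F} {f : F → G} (hW : IsOpen W)
    (hf : ContDiffOn ℝ 1 f W)
    {H H' : F × G → F × G} {U V : Set (F × G)} {k : ℕ} (h : IsCkDiffeoOn (k + 1) H H' U V)
    (hi : ∀ z ∈ U, z ∈ graphSet W f → H z ∈ graphSet W f) {x : F} (hx : x ∈ W)
    (hxU : (x, f x) ∈ U) :
    sig f x ∈ liftU H U ∧ liftH H (sig f x) = sig f (H (x, f x)).1 := by
  obtain ⟨h1, h2, h3, h4, h5, h6, h7, h8⟩ := h
  have hk : ((k + 1 : ℕ) : WithTop ℕ∞) ≠ 0 := by simp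
  have hD : HasFDerivAt H (fderiv ℝ H (x, f x)) (x, f x) :=
    ((h3.contDiffAt (h1.mem_nhds hxU)).differentiableAt hk).hasFDerivAt
  have hD' : HasFDerivAt H' (fderiv ℝ H' (H (x, f x))) (H (x, f x)) :=
    ((h4.contDiffAt (h2.mem_nhds (h5 hxU))).differentiableAt hk).hasFDerivAt
  have hid : ∀ v, fderiv ℝ H' (H (x, f x)) (fderiv ℝ H (x, f x) v) = v := by
    have := (hD'.comp (x, f x) hD).congr_of_eventuallyEq (f₁ := id)
      (by filter_upwards [h1.mem_nhds hxU] with x hx using (h7 x hx).symm)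
    intro v
    exact congrArg (fun T : F × G →L[ℝ] F × G => T v) (this.unique (hasFDerivAt_id _))
  have hfd : ∀ y ∈ W, HasFDerivAt f (fderiv ℝ f y) y := fun y hy =>
    ((hf.contDiffAt (hW.mem_nhds hy)).differentiableAt one_ne_zero).hasFDerivAt
  have hc : HasFDerivAt (fun y => (y, f y)) ((ContinuousLinearMap.id ℝ F).prod (fderiv ℝ f x)) x :=
    (hasFDerivAt_id x).prodMk (hfd x hx)
  have hHc : HasFDerivAt (fun y => H (y, f y)) (liftT H (sig f x)) x := by
    refine (hD.comp x hc).congr_fderiv (ContinuousLinearMap.ext fun v => ?_)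
    rw [liftT_apply]; rfl
  have hgx := hi _ hxU ⟨hx, rfl⟩
  have hM : HasFDerivAt (fun y => (H (y, f y)).1) (gliftM H (sig f x)) x :=
    (ContinuousLinearMap.fst ℝ F G).hasFDerivAt.comp x hHc
  have hS : HasFDerivAt (fun y => (H (y, f y)).2)
      ((ContinuousLinearMap.snd ℝ F G).comp (liftT H (sig f x))) x :=
    (ContinuousLinearMap.snd ℝ F G).hasFDerivAt.comp x hHc
  have hS' : HasFDerivAt (fun y => (H (y, f y)).2)
      ((fderiv ℝ f (H (x, f x)).1).comp (gliftM H (sig f x))) x := by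
    refine ((hfd _ hgx.1).comp x hM).congr_of_eventuallyEq ?_
    have : ∀ᶠ y in 𝓝 x, (y, f y) ∈ U := hc.continuousAt.eventually (h1.mem_nhds hxU)
    filter_upwards [this, hW.mem_nhds hx] with y hy hyW
    exact (hi _ hy ⟨hyW, rfl⟩).2
  have hSS := hS.unique hS'
  have hinj : Function.Injective (gliftM H (sig f x)) := by
    rw [injective_iff_map_eq_zero]
    intro v hv
    have h9 : (liftT H (sig f x) v).2 = 0 := by
      have := congrArg (fun T : F →L[ℝ] G => T v) hSS
      simpa [hv] using this
    have h10 : liftT H (sig f x) v = 0 := Prod.ext hv h9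
    rw [liftT_apply] at h10
    have h11 := hid (v, (sig f x).2 v)
    have h12 : fderiv ℝ H (x, f x) (v, (sig f x).2 v) = 0 := h10
    rw [h12, map_zero] at h11
    exact (congrArg Prod.fst h11).symm
  let M : F ≃L[ℝ] F := (LinearMap.linearEquivOfInjective (gliftM H (sig f x) : F →ₗ[ℝ] F) hinj
    rfl).toContinuousLinearEquiv
  have hMe : (M : F →L[ℝ] F) = gliftM H (sig f x) := ContinuousLinearMap.ext fun v => rfl
  refine ⟨⟨hxU, M, hMe⟩, ?_⟩
  refine Prod.ext (Prod.ext rfl hgx.2) ?_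
  show ((ContinuousLinearMap.snd ℝ F G).comp (liftT H (sig f x))).comp
    (ContinuousLinearMap.inverse (gliftM H (sig f x))) = fderiv ℝ f (H (x, f x)).1
  rw [hSS, ← hMe, ContinuousLinearMap.inverse_equiv]
  ext v
  simp

lemma lift_homogeneous [FiniteDimensional ℝ F] {W : Set F} {f : F → G} (hW : IsOpen W)
    (hf : ContDiffOn ℝ 1 f W) {k : ℕ} (h : CkHomogeneous (k + 1) (graphSet W f)) :
    CkHomogeneous k (sig f '' W) := by
  have : CompleteSpace F := FiniteDimensional.complete ℝ F
  rintro _ ⟨x, hx, rfl⟩ _ ⟨y, hy, rfl⟩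
  obtain ⟨U, V, H, H', hd, hxU, hyV, hxy, hi⟩ := h (x, f x) ⟨hx, rfl⟩ (y, f y) ⟨hy, rfl⟩
  rw [hd.image_iff'] at hi
  have hi1 : ∀ z ∈ U, z ∈ graphSet W f → H z ∈ graphSet W f := fun z hz hz' => (hi z hz).1 hz'
  have hi2 : ∀ z ∈ V, z ∈ graphSet W f → H' z ∈ graphSet W f := fun z hz hz' =>
    (hi _ (hd.symm'.2.2.2.2.1 hz)).2 (by rwa [hd.2.2.2.2.2.2.2 z hz])
  have hl := lift_diffeo hd
  refine ⟨_, _, _, _, hl, (lift_sig hW hf hd hi1 hx hxU).1, (lift_sig hW hf hd.symm' hi2 hy hyV).1,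
    ?_, hl.image_iff'.2 ?_⟩
  · rw [(lift_sig hW hf hd hi1 hx hxU).2, hxy]
  · intro p hp
    constructor
    · rintro ⟨x', hx', rfl⟩
      rw [(lift_sig hW hf hd hi1 hx' hp.1).2]
      exact ⟨_, (hi1 _ hp.1 ⟨hx', rfl⟩).1, rfl⟩
    · rintro ⟨y', hy', hpy⟩
      have hV : (y', f y') ∈ V := by
        have := (hl.2.2.2.2.1 hp).1
        rwa [← hpy] at this
      rw [← hl.2.2.2.2.2.2.1 p hp, ← hpy, (lift_sig hW hf hd.symm' hi2 hy' hV).2]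
      exact ⟨_, (hi2 _ hV ⟨hy', rfl⟩).1, rfl⟩

lemma continuousOn_sig {W : Set F} {f : F → G} (hW : IsOpen W)
    (hf : ContDiffOn ℝ 1 f W) : ContinuousOn (sig f) W :=
  (continuousOn_id.prodMk hf.continuousOn).prodMk (hf.continuousOn_fderiv_of_isOpen hW le_rfl)

lemma lift_locallyCompact [FiniteDimensional ℝ F] {W : Set F} {f : F → G} (hW : IsOpen W)
    (hf : ContDiffOn ℝ 1 f W) : LocallyCompactSubset (sig f '' W) := by
  have : ProperSpace F := FiniteDimensional.proper ℝ F
  rintro _ ⟨x, hx, rfl⟩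
  obtain ⟨r, hr, hb⟩ := Metric.nhds_basis_closedBall.mem_iff.1 (hW.mem_nhds hx)
  refine ⟨sig f '' closedBall x r, image_mono hb,
    (isCompact_closedBall x r).image_of_continuousOn ((continuousOn_sig hW hf).mono hb),
    (fun p => p.1.1) ⁻¹' ball x r, isOpen_ball.preimage (continuous_fst.comp continuous_fst),
    mem_ball_self hr, ?_⟩
  rintro _ ⟨⟨y, hy, rfl⟩, hy'⟩
  exact ⟨y, ball_subset_closedBall hy', rfl⟩

end Lift

section Induct

lemma CkHomogeneous.of_le {E : Type*} [NormedAddCommGroup E] [NormedSpace ℝ E] {k l : ℕ}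
    (hkl : k ≤ l) {N : Set E} (h : CkHomogeneous l N) : CkHomogeneous k N := by
  intro x hx y hy
  obtain ⟨U, V, H, H', hd, hr⟩ := h x hx y hy
  have hle : (k : WithTop ℕ∞) ≤ (l : WithTop ℕ∞) := by exact_mod_cast hkl
  exact ⟨U, V, H, H', ⟨hd.1, hd.2.1, hd.2.2.1.of_le hle, hd.2.2.2.1.of_le hle, hd.2.2.2.2⟩, hr⟩

theorem graph_somewhere {k : ℕ} (hk : 1 ≤ k) : ∀ {E : Type} [NormedAddCommGroup E]
    [NormedSpace ℝ E] [FiniteDimensional ℝ E] {N : Set E}, N.Nonempty → LocallyCompactSubset N →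
    CkHomogeneous k N → GraphSomewhere k N := by
  induction k, hk using Nat.le_induction with
  | base => intro E _ _ _ N h1 h2 h3; simpa using base_case h1 h2 h3
  | succ k hk ih =>
    intro E _ _ _ N hne hloc hhom
    obtain ⟨m, n, e, W, O, f, hW, hO, hWne, hf, hgr⟩ :=
      base_case hne hloc (hhom.of_le (by omega))
    replace hf : ContDiffOn ℝ 1 f W := by simpa using hf
    have hgraph : (e.symm ⁻¹' N) ∩ O = graphSet W f := by
      ext z; exact hgr z
    have hhomg : CkHomogeneous (k + 1) (graphSet W f) := by
      rw [← hgraph]; exact (hhom.map_equiv e).inter hO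
    obtain ⟨m', n', e', W', O', g, hW', hO', hWne', hg, hgr'⟩ :=
      ih (hWne.image (sig f)) (lift_locallyCompact hW hf) (lift_homogeneous hW hf hhomg)
    let τ : Euc m' → (Euc m × Euc n) × (Euc m →L[ℝ] Euc n) := fun u => e'.symm (u, g u)
    let θ : Euc m' → Euc m := fun u => (τ u).1.1
    have hτ : ∀ u ∈ W', θ u ∈ W ∧ τ u = sig f (θ u) := by
      intro u hu
      obtain ⟨⟨x, hx, hxu⟩, -⟩ := (hgr' (u, g u)).2 ⟨hu, rfl⟩
      have h1 : τ u = sig f x := hxu.symm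
      have h2 : θ u = x := by show (τ u).1.1 = x; rw [h1]; rfl
      rw [h2]
      exact ⟨hx, h1⟩
    have hτc : ContDiffOn ℝ k τ W' := e'.symm.contDiff.comp_contDiffOn (contDiffOn_id.prodMk hg)
    have hθc : ContDiffOn ℝ k θ W' := (contDiff_fst.comp contDiff_fst).comp_contDiffOn hτc
    have hθi : InjOn θ W' := by
      intro u hu v hv huv
      have h1 : τ u = τ v := by rw [(hτ u hu).2, (hτ v hv).2, huv]
      exact congrArg Prod.fst (e'.symm.injective h1)
    have hθo : IsOpen (θ '' W') := by
      have : θ '' W' = W ∩ (fun x => e' (sig f x)) ⁻¹' O' := by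
        ext x
        constructor
        · rintro ⟨u, hu, rfl⟩
          refine ⟨(hτ u hu).1, ?_⟩
          show e' (sig f (θ u)) ∈ O'
          rw [← (hτ u hu).2]
          have := ((hgr' (u, g u)).2 ⟨hu, rfl⟩).2
          simpa [τ] using this
        · rintro ⟨hx, hxO⟩
          obtain ⟨h1, h2⟩ := (hgr' (e' (sig f x))).1 ⟨by simpa using ⟨x, hx, rfl⟩, hxO⟩
          refine ⟨_, h1, ?_⟩
          have h3 : τ (e' (sig f x)).1 = sig f x := by
            show e'.symm ((e' (sig f x)).1, g (e' (sig f x)).1) = _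
            rw [← h2]; simp
          show (τ (e' (sig f x)).1).1.1 = x
          rw [h3]; rfl
      rw [this]
      exact (e'.continuous.comp_continuousOn (continuousOn_sig hW hf)).isOpen_inter_preimage hW hO'
    obtain ⟨u, hu, A, hA⟩ := exists_bij hW' hWne'
      (hθc.of_le (by exact_mod_cast hk)) hθi hθo
    obtain ⟨s, hsu, hsc, hs⟩ := exists_loc_inv hk (hθc.contDiffAt (hW'.mem_nhds hu)) hA
    have hsW : ∀ᶠ x in 𝓝 (θ u), s x ∈ W' :=
      hsc.continuousAt.eventually (by rw [hsu]; exact hW'.mem_nhds hu)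
    have hfc : ContDiffAt ℝ k (fderiv ℝ f) (θ u) := by
      have h1 : ContDiffAt ℝ k (fun x => (τ (s x)).2) (θ u) := by
        have h2 : ContDiffAt ℝ k τ (s (θ u)) := by
          rw [hsu]; exact hτc.contDiffAt (hW'.mem_nhds hu)
        have h3 : ContDiffAt ℝ k (τ ∘ s) (θ u) := h2.comp _ hsc
        exact h3.snd
      refine h1.congr_of_eventuallyEq ?_
      filter_upwards [hs, hsW] with x hx hxW
      rw [(hτ _ hxW).2, hx]; rfl
    obtain ⟨X, hX, hXo, huX⟩ := _root_.eventually_nhds_iff.1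
      ((hfc.eventually (by simp)).and (hW.mem_nhds (hτ u hu).1))
    refine ⟨m, n, e, X, O ∩ Prod.fst ⁻¹' X, f, hXo, hO.inter (hXo.preimage continuous_fst),
      ⟨_, huX⟩, ?_, ?_⟩
    · have hXW : X ⊆ W := fun x hx => (hX x hx).2
      push_cast
      rw [contDiffOn_succ_iff_fderiv_of_isOpen hXo]
      refine ⟨(hf.mono hXW).differentiableOn one_ne_zero, by simp, fun x hx => (hX x hx).1.contDiffWithinAt⟩
    · intro z
      constructor
      · rintro ⟨h1, h2, h3⟩
        exact ⟨h3, ((hgr z).1 ⟨h1, h2⟩).2⟩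
      · rintro ⟨h1, h2⟩
        have := (hgr z).2 ⟨(hX _ h1).2, h2⟩
        exact ⟨this.1, this.2, h1⟩

end Induct

section Final

/-- concatenation of coordinates -/
lemma exists_concat (m n : ℕ) : ∃ L : (Euc m × Euc n) ≃L[ℝ] Euc (m + n),
    ∀ z : Euc m × Euc n, (∀ i : Fin (m + n), m ≤ (i : ℕ) → L z i = 0) ↔ z.2 = 0 := by
  let T : (Euc m × Euc n) →ₗ[ℝ] Euc (m + n) :=
    { toFun := fun z => WithLp.toLp 2 (Fin.append (fun i => z.1 i) (fun i => z.2 i))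
      map_add' := by
        intro x y
        ext i
        refine Fin.addCases (fun i => ?_) (fun i => ?_) i <;> simp
      map_smul' := by
        intro c x
        ext i
        refine Fin.addCases (fun i => ?_) (fun i => ?_) i <;> simp }
  have hT1 : ∀ z i, T z (Fin.castAdd n i) = z.1 i := fun z i => by simp [T]
  have hT2 : ∀ z i, T z (Fin.natAdd m i) = z.2 i := fun z i => by simp [T]
  have hinj : Function.Injective T := by
    intro x y hxy
    refine Prod.ext ?_ ?_
    · ext i; rw [← hT1, ← hT1, hxy]
    · ext i; rw [← hT2, ← hT2, hxy]
  refine ⟨(LinearMap.linearEquivOfInjective T hinj (by simp)).toContinuousLinearEquiv, ?_⟩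
  intro z
  have hL : ∀ i, (LinearMap.linearEquivOfInjective T hinj (by simp)).toContinuousLinearEquiv z i
    = T z i := fun i => rfl
  simp only [hL]
  constructor
  · intro h
    ext i
    rw [← hT2, h _ (by simp)]; rfl
  · intro h i hi
    refine Fin.addCases (motive := fun i => m ≤ (i : ℕ) → T z i = 0) (fun i hi => ?_)
      (fun i hi => ?_) i hi
    · have := i.2
      simp only [Fin.val_castAdd] at hi
      omega
    · rw [hT2, h]; rfl

lemma graph_straighten {k m n : ℕ} {W : Set (Euc m)} {f : Euc m → Euc n} (hW : IsOpen W)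
    (hf : ContDiffOn ℝ k f W) {O : Set (Euc m × Euc n)} (hO : IsOpen O) :
    IsCkDiffeoOn k (fun z : Euc m × Euc n => (z.1, z.2 - f z.1))
      (fun z : Euc m × Euc n => (z.1, z.2 + f z.1)) (O ∩ Prod.fst ⁻¹' W)
      ((Prod.fst ⁻¹' W) ∩ (fun z : Euc m × Euc n => (z.1, z.2 + f z.1)) ⁻¹' O) := by
  have hfW : ContDiffOn ℝ k (fun z : Euc m × Euc n => f z.1) (Prod.fst ⁻¹' W) :=
    hf.comp contDiffOn_fst (fun z hz => hz)
  have hWo : IsOpen (Prod.fst ⁻¹' W : Set (Euc m × Euc n)) := hW.preimage continuous_fst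
  have h1 : ContDiffOn ℝ k (fun z : Euc m × Euc n => (z.1, z.2 - f z.1)) (Prod.fst ⁻¹' W) :=
    contDiffOn_fst.prodMk (contDiffOn_snd.sub hfW)
  have h2 : ContDiffOn ℝ k (fun z : Euc m × Euc n => (z.1, z.2 + f z.1)) (Prod.fst ⁻¹' W) :=
    contDiffOn_fst.prodMk (contDiffOn_snd.add hfW)
  refine ⟨hO.inter hWo, h2.continuousOn.isOpen_inter_preimage hWo hO, h1.mono inter_subset_right,
    h2.mono inter_subset_left, ?_, ?_, ?_, ?_⟩
  · rintro z ⟨hz, hzW⟩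
    exact ⟨hzW, by simpa using hz⟩
  · rintro z ⟨hz, hzW⟩
    exact ⟨hzW, hz⟩
  · intro z _; simp
  · intro z _; simp

theorem final_aux {k d : ℕ} (hk : 1 ≤ k)
    (N : Set (Euc d)) (hloc : LocallyCompactSubset N) (hhom : CkHomogeneous k N) :
    IsCkSubmanifold k d N := by
  intro p hp
  obtain ⟨m, n, e, W, O, f, hW, hO, ⟨w, hw⟩, hf, hgr⟩ := graph_somewhere hk ⟨p, hp⟩ hloc hhom
  have hd : d = m + n := by
    have := e.toLinearEquiv.finrank_eq
    simpa using this
  subst hd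
  obtain ⟨L, hL⟩ := exists_concat m n
  have he : ∀ {X Y : Type} [NormedAddCommGroup X] [NormedSpace ℝ X] [NormedAddCommGroup Y]
      [NormedSpace ℝ Y] (e : X ≃L[ℝ] Y), IsCkDiffeoOn k e e.symm univ univ := fun e =>
    ⟨isOpen_univ, isOpen_univ, e.contDiff.contDiffOn, e.symm.contDiff.contDiffOn,
      mapsTo_univ _ _, mapsTo_univ _ _, fun x _ => e.symm_apply_apply x,
      fun x _ => e.apply_symm_apply x⟩
  obtain ⟨hq1, hq2⟩ := (hgr (w, f w)).2 ⟨hw, rfl⟩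
  obtain ⟨U, V, H, H', hdif, hpU, hqV, hpq, hi⟩ := hhom p hp _ hq1
  rw [hdif.image_iff'] at hi
  have hbig := ((hdif.trans' (he e)).trans' (graph_straighten hW hf hO)).trans' (he L)
  refine ⟨_, _, _, _, m, hbig, ?_, ?_⟩
  · refine ⟨⟨⟨hpU, trivial⟩, ?_⟩, trivial⟩
    show e (H p) ∈ O ∩ Prod.fst ⁻¹' W
    rw [hpq, e.apply_symm_apply]
    exact ⟨hq2, hw⟩
  · rw [inter_comm _ {x | _}, hbig.image_iff']
    rintro x ⟨⟨⟨hxU, -⟩, hxO, hxW⟩, -⟩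
    change e (H x) ∈ O at hxO
    change (e (H x)).1 ∈ W at hxW
    rw [hi x hxU]
    show _ ↔ ∀ i : Fin (m + n), m ≤ (i : ℕ) → L ((e (H x)).1, (e (H x)).2 - f (e (H x)).1) i = 0
    rw [hL]
    have := hgr (e (H x))
    rw [e.symm_apply_apply] at this
    show _ ↔ (e (H x)).2 - f (e (H x)).1 = 0
    rw [sub_eq_zero]
    exact ⟨fun h => (this.1 ⟨h, hxO⟩).2, fun h => (this.2 ⟨hxW, h⟩).1⟩

end Final

/-- **Corollary 1.3.** For any integer `k ≥ 1`, every locally compact subset of `ℝ^d` that is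
`C^k` homogeneous is a `C^k` submanifold of `ℝ^d`. -/
theorem locally_compact_ck_homogeneous_is_ck_submanifold (d k : ℕ) (hd : 1 ≤ d) (hk : 1 ≤ k)
    (N : Set (Euc d)) (hloc : LocallyCompactSubset N) (hhom : CkHomogeneous k N) :
    IsCkSubmanifold k d N := by
  exact final_aux hk N hloc hhom
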